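/- arXiv:1604.08713 — 2 statements merged into one kernel-verified Lean document; each statement's English description precedes it below -/
import Mathlib

section
/- Let d ∈ ℕ, 0 < p,q < ∞ and 0 ≤ s < 1/p. There exists a constant c > 0 depending only on p, q, s, d such that for every infinite sequence S in [0,1)^d and every integer N ≥ 2 one has (∑_{j∈ℕ_{−1}^d} 2^{|j|(s−1/p+1)q} (∑_{m∈𝔻_j} |⟨D_S^N, h_{j,m}⟩|^p)^{q/p})^{1/q} ≥ c · N^{s−1} (log N)^{(d−1)/q}. -/
open MeasureTheory
open scoped ENNReal

noncomputable section

/-- The closed unit cube `[0,1]^d`. -/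
def unitCube (d : ℕ) : Set (Fin d → ℝ) := Set.univ.pi fun _ => Set.Icc (0:ℝ) 1

/-- The half-open unit cube `[0,1)^d`. -/
def unitCubeIco (d : ℕ) : Set (Fin d → ℝ) := Set.univ.pi fun _ => Set.Ico (0:ℝ) 1

/-- Discrepancy function of the first `N` points of the sequence `S` in `[0,1)^d`. -/
def discSeq (d : ℕ) (S : ℕ → Fin d → ℝ) (N : ℕ) (x : Fin d → ℝ) : ℝ :=
  (Nat.card {k : Fin N // ∀ i, S k i < x i} : ℝ) / N - ∏ i, x i

/-- One-dimensional Haar function `h_{j,m}`, with `h_{-1,0} = 1_{[0,1)}`. -/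
def haar1 (j : ℤ) (m : ℕ) (x : ℝ) : ℝ :=
  if j = -1 then (if 0 ≤ x ∧ x < 1 then 1 else 0)
  else if (m:ℝ)/2^j.toNat ≤ x ∧ x < ((m:ℝ) + 1/2)/2^j.toNat then 1
  else if ((m:ℝ) + 1/2)/2^j.toNat ≤ x ∧ x < ((m:ℝ)+1)/2^j.toNat then -1
  else 0

/-- `d`-dimensional (tensor product) Haar function. -/
def haarFn (d : ℕ) (j : Fin d → ℤ) (m : Fin d → ℕ) (x : Fin d → ℝ) : ℝ :=
  ∏ i, haar1 (j i) (m i) (x i)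

/-- Haar coefficient `⟨f, h_{j,m}⟩`. -/
def haarCoeff (d : ℕ) (f : (Fin d → ℝ) → ℝ) (j : Fin d → ℤ) (m : Fin d → ℕ) : ℝ :=
  ∫ x in unitCube d, f x * haarFn d j m x

/-- `|j| = max(j₁,0) + ⋯ + max(j_d,0)`. -/
def jnorm (d : ℕ) (j : Fin d → ℤ) : ℕ := ∑ i, (j i).toNat

/-- One-dimensional dyadic interval `I_{j,m}`. -/
def dyadicI (j : ℤ) (m : ℕ) : Set ℝ :=
  Set.Ico ((m:ℝ)/2^j.toNat) (((m:ℝ)+1)/2^j.toNat)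

/-- `d`-dimensional dyadic box `I_{j,m}`. -/
def dyadicBox (d : ℕ) (j : Fin d → ℤ) (m : Fin d → ℕ) : Set (Fin d → ℝ) :=
  Set.univ.pi fun i => dyadicI (j i) (m i)

/-- The index set `𝔻_j` as a finset. -/
def Dfin (d : ℕ) (j : Fin d → ℤ) : Finset (Fin d → ℕ) :=
  Fintype.piFinset fun i => Finset.range (2 ^ (j i).toNat)

/-- The index set `𝔻_j` for `j ∈ ℕ₀^d`. -/
def Dfin0 (d : ℕ) (j : Fin d → ℕ) : Finset (Fin d → ℕ) :=
  Fintype.piFinset fun i => Finset.range (2 ^ (j i))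

/-- Coordinate of the `k`-th point of a digital sequence over `𝔽₂` with generating
matrix `C` (`0`-based rows and columns). -/
def digitalCoord (C : ℕ → ℕ → ZMod 2) (k : ℕ) : ℝ :=
  ∑' i : ℕ,
    (((∑ ℓ ∈ Finset.range (k+1), C i ℓ * (if k.testBit ℓ then 1 else 0)).val : ℕ) : ℝ) / 2 ^ (i + 1)

/-- The digital sequence over `𝔽₂` generated by matrices `C 0, …, C (d-1)`. -/
def digitalSeq (d : ℕ) (C : Fin d → ℕ → ℕ → ZMod 2) : ℕ → Fin d → ℝ :=
  fun k j => digitalCoord (C j) k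

/-- `C 0, …, C (d-1)` generate an order `α` digital `(t,n,d)`-net over `𝔽₂`,
where the relevant submatrices have `q` rows (`q ≥ αn`) and `n` columns.
Row indices are `0`-based; the `1`-based row value of row `r` is `r+1`. -/
def IsOrderNet (α n t q d : ℕ) (C : Fin d → ℕ → ℕ → ZMod 2) : Prop :=
  ∀ (ν : Fin d → ℕ) (r : ∀ j : Fin d, Fin (ν j) → ℕ),
    (∀ j, StrictAnti (r j)) →
    (∀ j l, r j l < q) →
    (∑ j, ∑ l ∈ Finset.univ.filter (fun l : Fin (ν j) => (l:ℕ) < α), (r j l + 1)) ≤ α * n - t →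
    LinearIndependent (ZMod 2)
      (fun p : Σ j : Fin d, Fin (ν j) => fun col : Fin n => C p.1 (r p.1 p.2) col)

/-- `C 0, …, C (d-1)` generate an order `α` digital `(t,d)`-sequence over `𝔽₂`. -/
def IsOrderSeq (α t d : ℕ) (C : Fin d → ℕ → ℕ → ZMod 2) : Prop :=
  ∀ n : ℕ, t < α * n → IsOrderNet α n t (α * n) d C

/-- The condition `e_{i,k,ℓ} = 0` for all `k > 2ℓ` (in `1`-based indexing). -/
def Triangular2 (d : ℕ) (E : Fin d → ℕ → ℕ → ZMod 2) : Prop :=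
  ∀ i k ℓ, 2 * (ℓ + 1) < k + 1 → E i k ℓ = 0

open scoped Classical in
/-- The quantity `λ(U)⁻¹ ∑_{j ∈ ℕ₀^d} 2^{|j|} ∑_{m : I_{j,m} ⊆ U} ⟨f,h_{j,m}⟩²`. -/
def bmoSq (d : ℕ) (f : (Fin d → ℝ) → ℝ) (U : Set (Fin d → ℝ)) : ℝ≥0∞ :=
  (volume U)⁻¹ * ∑' j : Fin d → ℕ, ∑ m ∈ Dfin0 d j,
    if dyadicBox d (fun i => (j i : ℤ)) m ⊆ U then
      (2:ℝ≥0∞) ^ (∑ i, j i) * ENNReal.ofReal ((haarCoeff d f (fun i => (j i : ℤ)) m)^2)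
    else 0

/-- The BMO (semi-)norm `‖f | bmo^d‖`. -/
def bmoNorm (d : ℕ) (f : (Fin d → ℝ) → ℝ) : ℝ≥0∞ :=
  (⨆ U : {U : Set (Fin d → ℝ) // MeasurableSet U ∧ U ⊆ unitCubeIco d ∧ 0 < volume U},
    bmoSq d f U.1) ^ (1/2 : ℝ)

/-- The Orlicz norm of `f` on `[0,1)^d` with respect to the Young function `ψ`,
with the convention `inf ∅ = ∞`. -/
def orliczNorm (d : ℕ) (ψ : ℝ → ℝ) (f : (Fin d → ℝ) → ℝ) : ℝ≥0∞ :=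
  ⨅ K : {K : ℝ // 0 < K ∧ ∫ x in unitCubeIco d, ψ (|f x| / K) ≤ 1}, ENNReal.ofReal K.1

/-- `ψ` is a Young function which coincides with `exp(x^β) - 1` for all large `x`. -/
def IsYoungExp (β : ℝ) (ψ : ℝ → ℝ) : Prop :=
  ConvexOn ℝ (Set.Ici 0) ψ ∧ ψ 0 = 0 ∧ (∀ x : ℝ, 0 < x → 0 < ψ x) ∧
    ∃ x₀ : ℝ, ∀ x ≥ x₀, ψ x = Real.exp (x ^ β) - 1

/-- The set of valid Haar indices `j ∈ ℕ_{-1}^d`. -/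
def validJ (d : ℕ) : Set (Fin d → ℤ) := {j | ∀ i, -1 ≤ j i}

/-- The `q`-th power of the Haar-characterization of the `S^s_{p,q}B` norm:
`∑_{j ∈ ℕ_{-1}^d} 2^{|j|(s-1/p+1)q} (∑_{m ∈ 𝔻_j} |⟨f,h_{j,m}⟩|^p)^{q/p}`. -/
def besovSum (d : ℕ) (p q s : ℝ) (f : (Fin d → ℝ) → ℝ) : ℝ≥0∞ :=
  ∑' j : validJ d,
    ENNReal.ofReal ((2:ℝ) ^ ((jnorm d j.1 : ℝ) * (s - 1/p + 1) * q) *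
      (∑ m ∈ Dfin d j.1, |haarCoeff d f j.1 m| ^ p) ^ (q / p))

/-- Coordinate of the `k`-th point of a digital net with `q × n` generating matrix `C`. -/
def netCoord (q n : ℕ) (C : ℕ → ℕ → ZMod 2) (k : ℕ) : ℝ :=
  ∑ i ∈ Finset.range q,
    ((∑ ℓ ∈ Finset.range n, C i ℓ * (if k.testBit ℓ then 1 else 0)).val : ℝ) / 2 ^ (i + 1)

/-- `n_{μ+1}`, with the convention `n_{r+1} = log₂ N` (indices `1`-based, `n` stored `0`-based). -/
def nExt (r : ℕ) (n : Fin r → ℕ) (N : ℕ) (μ : ℕ) : ℝ :=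
  if h : μ < r then (n ⟨μ, h⟩ : ℝ) else Real.logb 2 N

/-- `n_μ`, with the convention `n_0 = 0` (indices `1`-based, `n` stored `0`-based). -/
def nPrev (r : ℕ) (n : Fin r → ℕ) (μ : ℕ) : ℝ :=
  if h : 1 ≤ μ ∧ μ ≤ r then (n ⟨μ - 1, by omega⟩ : ℝ) else 0

/-- The dyadic square function `Sf`, valued in `ℝ≥0∞`. -/
def sqFnE (d : ℕ) (f : (Fin d → ℝ) → ℝ) (x : Fin d → ℝ) : ℝ≥0∞ :=
  (∑' j : validJ d, ∑ m ∈ Dfin d j.1,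
    ENNReal.ofReal ((2:ℝ) ^ (2 * jnorm d j.1) * (haarCoeff d f j.1 m)^2 *
      (dyadicBox d j.1 m).indicator (fun _ => (1:ℝ)) x)) ^ (1/2 : ℝ)

/-- `sup_{p > 1} p^{-1/β} ‖f‖_{L_p([0,1]^d)}`. -/
def supLp (d : ℕ) (β : ℝ) (f : (Fin d → ℝ) → ℝ) : ℝ≥0∞ :=
  ⨆ p : {p : ℝ // 1 < p},
    ENNReal.ofReal ((p:ℝ) ^ (-(1/β))) * eLpNorm f (ENNReal.ofReal (p:ℝ)) (volume.restrict (unitCube d))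

/-- `‖f | 𝒟₀^d‖² = ∑_{j ∈ ℕ₀^d} 2^{|j|} ∑_{m ∈ 𝔻_j} ⟨f,h_{j,m}⟩²`. -/
def dNormSq (d : ℕ) (f : (Fin d → ℝ) → ℝ) : ℝ≥0∞ :=
  ∑' j : Fin d → ℕ, ∑ m ∈ Dfin0 d j,
    ENNReal.ofReal ((2:ℝ) ^ (∑ i, j i) * (haarCoeff d f (fun i => (j i : ℤ)) m)^2)

/-- `‖f | 𝒟₀^d‖`. -/
def dNorm (d : ℕ) (f : (Fin d → ℝ) → ℝ) : ℝ≥0∞ := (dNormSq d f) ^ (1/2 : ℝ)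


lemma aux_haar_eq (j m : ℕ) (x : ℝ) : haar1 (j:ℤ) m x =
    (Set.Ico ((m:ℝ)/2^j) (((m:ℝ)+1/2)/2^j)).indicator (fun _ => (1:ℝ)) x
    - (Set.Ico (((m:ℝ)+1/2)/2^j) (((m:ℝ)+1)/2^j)).indicator (fun _ => (1:ℝ)) x := by
  have h : (j:ℤ) ≠ -1 := by omega
  unfold haar1
  rw [if_neg h]
  simp only [Int.toNat_natCast, Set.indicator_apply, Set.mem_Ico]
  by_cases h1 : (m:ℝ)/2^j ≤ x ∧ x < ((m:ℝ)+1/2)/2^j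
  · have : ¬ (((m:ℝ)+1/2)/2^j ≤ x ∧ x < ((m:ℝ)+1)/2^j) := fun h => absurd h.1 (not_le.mpr h1.2)
    rw [if_pos h1, if_pos h1, if_neg this]; simp
  · rw [if_neg h1, if_neg h1]
    split_ifs <;> simp

lemma aux_haar_int (j m : ℕ) (hm : m < 2^j) (f : ℝ → ℝ)
    (hf : IntegrableOn f (Set.Icc 0 1)) :
    ∫ x in Set.Icc (0:ℝ) 1, f x * haar1 (j:ℤ) m x =
     (∫ x in Set.Ico ((m:ℝ)/2^j) (((m:ℝ)+1/2)/2^j), f x)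
     - ∫ x in Set.Ico (((m:ℝ)+1/2)/2^j) (((m:ℝ)+1)/2^j), f x := by
  have hP : (0:ℝ) < 2^j := by positivity
  have hm' : (m:ℝ) + 1 ≤ 2^j := by exact_mod_cast hm
  have h0 : (0:ℝ) ≤ (m:ℝ)/2^j := by positivity
  have h0' : (0:ℝ) ≤ ((m:ℝ)+1/2)/2^j := by positivity
  have h1 : ((m:ℝ)+1)/2^j ≤ 1 := by rw [div_le_one hP]; exact hm'
  have h1' : ((m:ℝ)+1/2)/2^j ≤ 1 := by rw [div_le_one hP]; linarith
  have s1 : Set.Ico ((m:ℝ)/2^j) (((m:ℝ)+1/2)/2^j) ⊆ Set.Icc 0 1 :=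
    fun x hx => ⟨h0.trans hx.1, hx.2.le.trans h1'⟩
  have s2 : Set.Ico (((m:ℝ)+1/2)/2^j) (((m:ℝ)+1)/2^j) ⊆ Set.Icc 0 1 :=
    fun x hx => ⟨h0'.trans hx.1, hx.2.le.trans h1⟩
  have e : ∀ x, f x * haar1 (j:ℤ) m x =
     (Set.Ico ((m:ℝ)/2^j) (((m:ℝ)+1/2)/2^j)).indicator f x
     - (Set.Ico (((m:ℝ)+1/2)/2^j) (((m:ℝ)+1)/2^j)).indicator f x := by
    intro x
    rw [aux_haar_eq]
    simp only [Set.indicator_apply]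
    split_ifs <;> simp
  simp_rw [e]
  rw [integral_sub, setIntegral_indicator measurableSet_Ico, setIntegral_indicator measurableSet_Ico,
    Set.inter_eq_self_of_subset_right s1, Set.inter_eq_self_of_subset_right s2]
  · exact hf.indicator measurableSet_Ico
  · exact hf.indicator measurableSet_Ico

lemma aux_int_id (a b : ℝ) (h : a ≤ b) : ∫ x in Set.Ico a b, x = (b^2 - a^2)/2 := by
  rw [integral_Ico_eq_integral_Ioc, ← intervalIntegral.integral_of_le h, integral_id]

lemma aux_haar_id (j m : ℕ) (hm : m < 2^j) :
    ∫ x in Set.Icc (0:ℝ) 1, x * haar1 (j:ℤ) m x = - (1 / (4 * (2^j)^2)) := by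
  have hP : (0:ℝ) < 2^j := by positivity
  rw [aux_haar_int j m hm (fun x => x) continuous_id.continuousOn.integrableOn_Icc,
    aux_int_id, aux_int_id]
  · field_simp; ring
  · gcongr; norm_num
  · gcongr; norm_num

lemma aux_haar_ind (j m : ℕ) (hm : m < 2^j) (z : ℝ) (hz : z ∉ dyadicI (j:ℤ) m) :
    ∫ x in Set.Icc (0:ℝ) 1, (if z < x then (1:ℝ) else 0) * haar1 (j:ℤ) m x = 0 := by
  have hP : (0:ℝ) < 2^j := by positivity
  have hf : IntegrableOn (fun x => if z < x then (1:ℝ) else 0) (Set.Icc 0 1) := by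
    have : (fun x => if z < x then (1:ℝ) else 0) = (Set.Ioi z).indicator (fun _ => (1:ℝ)) := by
      ext x; simp [Set.indicator_apply]
    rw [this]
    exact (integrableOn_const (by simp)).indicator measurableSet_Ioi
  rw [aux_haar_int j m hm _ hf]
  have hab : (m:ℝ)/2^j ≤ ((m:ℝ)+1/2)/2^j := by gcongr; norm_num
  have hbc : ((m:ℝ)+1/2)/2^j ≤ ((m:ℝ)+1)/2^j := by gcongr; norm_num
  simp only [dyadicI, Int.toNat_natCast, Set.mem_Ico, not_and, not_lt] at hz
  by_cases h : (m:ℝ)/2^j ≤ z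
  · have hc := hz h
    have g1 : ∀ a b : ℝ, b ≤ z → ∫ x in Set.Ico a b, (if z < x then (1:ℝ) else 0) = 0 := by
      intro a b hb
      rw [setIntegral_congr_fun (g := fun _ => (0:ℝ)) measurableSet_Ico]
      · simp
      · intro x hx; exact if_neg (by linarith [hx.2])
    rw [g1 _ _ (hbc.trans hc), g1 _ _ hc, sub_zero]
  · push Not at h
    have g1 : ∀ a b : ℝ, a ≤ b → z < a →
        ∫ x in Set.Ico a b, (if z < x then (1:ℝ) else 0) = b - a := by
      intro a b hb hz
      rw [setIntegral_congr_fun (g := fun _ => (1:ℝ)) measurableSet_Ico]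
      · simp [hb]
      · intro x hx; exact if_pos (by linarith [hx.1])
    rw [g1 _ _ hab h, g1 _ _ hbc (h.trans_le hab)]
    field_simp; ring

lemma aux_haar_integrable (j m : ℕ) (f : ℝ → ℝ) (hf : IntegrableOn f (Set.Icc 0 1)) :
    IntegrableOn (fun x => f x * haar1 (j:ℤ) m x) (Set.Icc 0 1) := by
  have e : ∀ x, f x * haar1 (j:ℤ) m x =
     (Set.Ico ((m:ℝ)/2^j) (((m:ℝ)+1/2)/2^j)).indicator f x
     - (Set.Ico (((m:ℝ)+1/2)/2^j) (((m:ℝ)+1)/2^j)).indicator f x := by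
    intro x
    rw [aux_haar_eq]
    simp only [Set.indicator_apply]
    split_ifs <;> simp
  simp_rw [e]
  exact (hf.indicator measurableSet_Ico).sub (hf.indicator measurableSet_Ico)

lemma aux_ind_integrable (z : ℝ) :
    IntegrableOn (fun x => if z < x then (1:ℝ) else 0) (Set.Icc 0 1) := by
  have : (fun x => if z < x then (1:ℝ) else 0) = (Set.Ioi z).indicator (fun _ => (1:ℝ)) := by
    ext x; simp [Set.indicator_apply]
  rw [this]
  exact (integrableOn_const (by simp)).indicator measurableSet_Ioi

lemma aux_restrict (d : ℕ) : (volume : Measure (Fin d → ℝ)).restrict (unitCube d) =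
    Measure.pi (fun _ => (volume : Measure ℝ).restrict (Set.Icc 0 1)) := by
  rw [unitCube, volume_pi, Measure.restrict_pi_pi]

lemma aux_prod_int (d : ℕ) (f : Fin d → ℝ → ℝ) (j m : Fin d → ℕ) :
    ∫ x in unitCube d, (∏ i, f i (x i)) * haarFn d (fun i => (j i : ℤ)) m x =
      ∏ i, ∫ x in Set.Icc (0:ℝ) 1, f i x * haar1 (j i : ℤ) (m i) x := by
  rw [aux_restrict]
  simp_rw [haarFn, ← Finset.prod_mul_distrib]
  exact integral_fintype_prod_eq_prod (fun i x => f i x * haar1 (j i : ℤ) (m i) x)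

lemma aux_prod_integrable (d : ℕ) (f : Fin d → ℝ → ℝ) (j m : Fin d → ℕ)
    (hf : ∀ i, IntegrableOn (f i) (Set.Icc 0 1)) :
    IntegrableOn (fun x => (∏ i, f i (x i)) * haarFn d (fun i => (j i : ℤ)) m x)
      (unitCube d) := by
  rw [IntegrableOn, aux_restrict]
  simp_rw [haarFn, ← Finset.prod_mul_distrib]
  exact Integrable.fintype_prod (f := fun i x => f i x * haar1 (j i : ℤ) (m i) x)
    (fun i => aux_haar_integrable _ _ _ (hf i))

lemma aux_disc (d : ℕ) (S : ℕ → Fin d → ℝ) (N : ℕ) (x : Fin d → ℝ) :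
    discSeq d S N x = (∑ k : Fin N, ∏ i, (if S k i < x i then (1:ℝ) else 0)) / N - ∏ i, x i := by
  classical
  unfold discSeq
  congr 2
  rw [Nat.card_eq_fintype_card, Fintype.card_subtype]
  simp_rw [Finset.prod_boole]
  simp

lemma aux_coeff (d : ℕ) (S : ℕ → Fin d → ℝ) (N : ℕ) (j m : Fin d → ℕ)
    (hm : ∀ i, m i < 2^(j i)) (he : ∀ k : Fin N, ∃ i, S k i ∉ dyadicI (j i : ℤ) (m i)) :
    |haarCoeff d (discSeq d S N) (fun i => (j i : ℤ)) m| =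
      (4:ℝ)⁻¹^d * ((2^(∑ i, j i))^2)⁻¹ := by
  have h1 : haarCoeff d (discSeq d S N) (fun i => (j i : ℤ)) m =
      (∑ k : Fin N, ∫ x in unitCube d, (∏ i, (if S k i < x i then (1:ℝ) else 0)) *
        haarFn d (fun i => (j i : ℤ)) m x) / N -
      ∫ x in unitCube d, (∏ i, x i) * haarFn d (fun i => (j i : ℤ)) m x := by
    unfold haarCoeff
    rw [← integral_finsetSum, ← integral_div, ← integral_sub]
    · congr 1; ext x; rw [aux_disc, sub_mul, Finset.sum_div, Finset.sum_div, Finset.sum_mul]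
      congr 2; ext k; ring
    · refine Integrable.div_const (integrable_finsetSum _ fun k _ => ?_) _
      exact aux_prod_integrable d (fun i x => if S k i < x then (1:ℝ) else 0) j m
        (fun i => aux_ind_integrable _)
    · exact aux_prod_integrable d (fun i x => x) j m
        (fun i => continuous_id.continuousOn.integrableOn_Icc)
    · intro k _
      exact aux_prod_integrable d (fun i x => if S k i < x then (1:ℝ) else 0) j m
        (fun i => aux_ind_integrable _)
  have h2 : ∀ k : Fin N, ∫ x in unitCube d, (∏ i, (if S k i < x i then (1:ℝ) else 0)) *
        haarFn d (fun i => (j i : ℤ)) m x = 0 := by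
    intro k
    obtain ⟨i, hi⟩ := he k
    rw [aux_prod_int d (fun i x => if S k i < x then (1:ℝ) else 0) j m]
    exact Finset.prod_eq_zero (Finset.mem_univ i) (aux_haar_ind _ _ (hm i) _ hi)
  rw [h1, Finset.sum_eq_zero (fun k _ => h2 k), aux_prod_int d (fun i x => x) j m,
    Finset.prod_congr rfl (fun i _ => aux_haar_id (j i) (m i) (hm i)), zero_div, zero_sub, abs_neg,
    Finset.abs_prod]
  have : ∀ i, |-(1 / (4 * ((2:ℝ)^(j i))^2))| = 4⁻¹ * (((2:ℝ)^(j i))^2)⁻¹ := by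
    intro i
    rw [abs_neg, abs_of_nonneg (by positivity), one_div, mul_inv]
  simp_rw [this]
  rw [Finset.prod_mul_distrib, Finset.prod_inv_distrib (fun i => ((2:ℝ)^(j i))^2),
    Finset.prod_pow, Finset.prod_pow_eq_pow_sum]
  simp

lemma aux_term (d : ℕ) (p q s : ℝ) (hp : 0 < p) (hq : 0 < q) (S : ℕ → Fin d → ℝ)
    (N : ℕ) (j : Fin d → ℕ) (n : ℕ) (hn : ∑ i, j i = n) (hN : 2 * N ≤ 2^n) :
    (((2:ℝ)⁻¹^(1/p) * 4⁻¹^d) * ((2:ℝ)^n)^(s-1))^q ≤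
    (2:ℝ) ^ ((jnorm d (fun i => (j i : ℤ)) : ℝ) * (s - 1/p + 1) * q) *
      (∑ m ∈ Dfin d (fun i => (j i : ℤ)),
        |haarCoeff d (discSeq d S N) (fun i => (j i : ℤ)) m| ^ p) ^ (q / p) := by
  classical
  set A : ℝ := (2:ℝ)^n with hA
  have hA0 : 0 < A := by positivity
  set occ : Finset (Fin d → ℕ) :=
    Finset.univ.image (fun k : Fin N => fun i => ⌊S k i * 2^(j i)⌋₊) with hocc
  set D := Dfin d (fun i => (j i : ℤ)) with hD
  have hcD : D.card = 2^n := by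
    simp [hD, Dfin, Fintype.card_piFinset, Finset.prod_pow_eq_pow_sum, hn]
  have hco : occ.card ≤ N := by
    simpa using Finset.card_image_le (s := (Finset.univ : Finset (Fin N)))
      (f := fun k : Fin N => fun i => ⌊S k i * 2^(j i)⌋₊)
  have hcs : A/2 ≤ ((D \ occ).card : ℝ) := by
    have h1 : D.card - occ.card ≤ (D \ occ).card := Finset.le_card_sdiff _ _
    have h2 : 2^n ≤ 2 * (D \ occ).card := by omega
    have h3 : A ≤ 2 * ((D \ occ).card : ℝ) := by rw [hA]; exact_mod_cast h2
    linarith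
  have hval : ∀ m ∈ D \ occ, |haarCoeff d (discSeq d S N) (fun i => (j i : ℤ)) m| ^ p =
      ((4:ℝ)⁻¹^d * (A^2)⁻¹)^p := by
    intro m hm
    rw [Finset.mem_sdiff] at hm
    have hmD : ∀ i, m i < 2^(j i) := by
      have := hm.1
      simpa [hD, Dfin, Fintype.mem_piFinset] using this
    rw [aux_coeff d S N j m hmD, hn]
    intro k
    by_contra hcon
    push Not at hcon
    apply hm.2
    rw [hocc, Finset.mem_image]
    refine ⟨k, Finset.mem_univ _, ?_⟩
    ext i
    have hk := hcon i
    simp only [dyadicI, Int.toNat_natCast, Set.mem_Ico] at hk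
    have hP : (0:ℝ) < 2^(j i) := by positivity
    rw [div_le_iff₀ hP, lt_div_iff₀ hP] at hk
    rw [Nat.floor_eq_iff ((Nat.cast_nonneg _).trans hk.1)]
    exact hk
  have hsum : A/2 * ((4:ℝ)⁻¹^d * (A^2)⁻¹)^p ≤
      ∑ m ∈ D, |haarCoeff d (discSeq d S N) (fun i => (j i : ℤ)) m| ^ p := by
    calc _ ≤ ((D \ occ).card : ℝ) * ((4:ℝ)⁻¹^d * (A^2)⁻¹)^p := by gcongr
      _ = ∑ m ∈ D \ occ, |haarCoeff d (discSeq d S N) (fun i => (j i : ℤ)) m| ^ p := by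
        rw [Finset.sum_congr rfl hval]; simp
      _ ≤ _ := Finset.sum_le_sum_of_subset_of_nonneg Finset.sdiff_subset
        (fun _ _ _ => by positivity)
  have hj : jnorm d (fun i => (j i : ℤ)) = n := by simp [jnorm, hn]
  rw [hj]
  have e1 : (2:ℝ) ^ ((n : ℝ) * (s - 1/p + 1) * q) = (A^(s - 1/p + 1))^q := by
    rw [hA, ← Real.rpow_natCast, ← Real.rpow_mul (by norm_num), ← Real.rpow_mul (by norm_num),
      mul_assoc]
  have e2 : (A/2 * ((4:ℝ)⁻¹^d * (A^2)⁻¹)^p)^(q/p) =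
      (A^(1/p) * 2⁻¹^(1/p) * ((4:ℝ)⁻¹^d * A^(-2:ℝ)))^q := by
    have : q/p = (1/p) * q := by ring
    rw [this, Real.rpow_mul (by positivity), Real.mul_rpow (by positivity) (by positivity),
      ← Real.rpow_mul (by positivity), mul_one_div_cancel hp.ne', Real.rpow_one,
      div_eq_mul_inv A 2, Real.mul_rpow hA0.le (by norm_num), Real.rpow_neg hA0.le]
    norm_num
  calc _ = (A^(s - 1/p + 1))^q * (A/2 * ((4:ℝ)⁻¹^d * (A^2)⁻¹)^p)^(q/p) := by
        rw [e2, ← Real.mul_rpow (by positivity) (by positivity)]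
        congr 1
        have : A^(s-1) = A^(s - 1/p + 1) * A^(1/p) * A^(-2:ℝ) := by
          rw [← Real.rpow_add hA0, ← Real.rpow_add hA0]; congr 1; ring
        rw [this]; ring
    _ ≤ _ := by rw [e1]; gcongr

lemma aux_count (e n : ℕ) (p q s : ℝ) (f : (Fin (e+1) → ℝ) → ℝ) (T : ℝ)
    (hT : ∀ j : Fin (e+1) → ℕ, ∑ i, j i = n → T ≤
      (2:ℝ) ^ ((jnorm (e+1) (fun i => (j i : ℤ)) : ℝ) * (s - 1/p + 1) * q) *
      (∑ m ∈ Dfin (e+1) (fun i => (j i : ℤ)),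
        |haarCoeff (e+1) f (fun i => (j i : ℤ)) m| ^ p) ^ (q / p)) :
    ENNReal.ofReal (((n:ℝ)/(e+1:ℕ))^e * T) ≤ besovSum (e+1) p q s f := by
  let g0 : (Fin e → Fin (n/(e+1) + 1)) → Fin (e+1) → ℕ :=
    fun a => Fin.cons (n - ∑ i, (a i : ℕ)) (fun i => (a i : ℕ))
  have hle : ∀ a : Fin e → Fin (n/(e+1) + 1), ∑ i, (a i : ℕ) ≤ n := by
    intro a
    calc ∑ i, (a i : ℕ) ≤ ∑ i : Fin e, n/(e+1) :=
          Finset.sum_le_sum (fun i _ => Nat.lt_succ_iff.mp (a i).2)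
      _ = e * (n/(e+1)) := by simp
      _ ≤ (e+1) * (n/(e+1)) := by gcongr; omega
      _ ≤ n := Nat.mul_div_le _ _
  have hg0 : ∀ a, ∑ i, g0 a i = n := by
    intro a
    rw [Fin.sum_univ_succ]
    simp only [g0, Fin.cons_zero, Fin.cons_succ]
    have := hle a
    omega
  let g : (Fin e → Fin (n/(e+1) + 1)) → validJ (e+1) :=
    fun a => ⟨fun i => (g0 a i : ℤ), fun i => by
      show (-1:ℤ) ≤ (g0 a i : ℤ)
      omega⟩
  have hinj : Function.Injective g := by
    intro a b hab
    ext i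
    have h1 := congrFun (congrArg Subtype.val hab) i.succ
    simp only [g, g0, Fin.cons_succ] at h1
    exact_mod_cast h1
  unfold besovSum
  refine le_trans ?_ (ENNReal.tsum_comp_le_tsum_of_injective hinj _)
  rw [tsum_fintype]
  calc ENNReal.ofReal (((n:ℝ)/(e+1:ℕ))^e * T)
      ≤ ∑ a : (Fin e → Fin (n/(e+1) + 1)), ENNReal.ofReal T := by
        rw [ENNReal.ofReal_mul (by positivity)]
        simp only [Finset.sum_const, Finset.card_univ, Fintype.card_pi, Fintype.card_fin,
          Finset.prod_const, nsmul_eq_mul]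
        gcongr
        rw [← ENNReal.ofReal_natCast]
        apply ENNReal.ofReal_le_ofReal
        rw [Nat.cast_pow]
        gcongr
        rw [div_le_iff₀ (by positivity)]
        have := Nat.lt_div_mul_add (a := n) (b := e+1) (by omega)
        have h2 : n ≤ (n/(e+1) + 1) * (e+1) := by nlinarith
        exact_mod_cast h2
    _ ≤ _ := Finset.sum_le_sum fun a _ => ENNReal.ofReal_le_ofReal (hT (g0 a) (hg0 a))

/-- Besov `S^s_{p,q}B` lower bound (valid for every `N ≥ 2`), `0 ≤ s < 1/p`:
the `S^s_{p,q}B`-norm of `D_S^N` is at least `c · N^{s-1} (log N)^{(d-1)/q}`. -/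
theorem besov_lower_bound_all_N (d : ℕ) (hd : 0 < d) (p q s : ℝ) (hp : 0 < p) (hq : 0 < q)
    (hs0 : 0 ≤ s) (hs1 : s < 1/p) :
    ∃ c : ℝ, 0 < c ∧ ∀ S : ℕ → Fin d → ℝ, (∀ k, S k ∈ unitCubeIco d) →
      ∀ N : ℕ, 2 ≤ N →
        ENNReal.ofReal (c * (N:ℝ) ^ (s - 1) * Real.log N ^ (((d:ℝ) - 1)/q)) ≤
          (besovSum d p q s (discSeq d S N)) ^ (1/q) := by
  obtain ⟨e, rfl⟩ : ∃ e, d = e + 1 := ⟨d - 1, by omega⟩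
  set K : ℝ := (2:ℝ)⁻¹^(1/p) * 4⁻¹^(e+1) with hK
  have hK0 : 0 < K := by positivity
  have h4 : (0:ℝ) < 4^(s-1) := by positivity
  refine ⟨K * min 1 (4^(s-1)) * ((e+1:ℕ):ℝ)⁻¹^((e:ℝ)/q), ?_, ?_⟩
  · have : 0 < min 1 ((4:ℝ)^(s-1)) := lt_min one_pos h4
    positivity
  intro S _ N hN
  set n := Nat.log 2 N + 2 with hn
  have hlo : 2 * N ≤ 2^n := by
    have := Nat.lt_pow_succ_log_self (b := 2) (by norm_num) N
    rw [hn, pow_succ]; rw [Nat.succ_eq_add_one] at this; omega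
  have hhi : 2^n ≤ 4 * N := by
    have := Nat.pow_log_le_self 2 (x := N) (by omega)
    rw [hn, pow_add]; omega
  have hN0 : (0:ℝ) < N := by exact_mod_cast (by omega : 0 < N)
  set A : ℝ := (2:ℝ)^n with hA
  have hA0 : 0 < A := by positivity
  have hNA : (N:ℝ) ≤ A := by rw [hA]; exact_mod_cast (by omega : N ≤ 2^n)
  have hAN : A ≤ 4 * N := by rw [hA]; exact_mod_cast hhi
  have hAs : min 1 ((4:ℝ)^(s-1)) * (N:ℝ)^(s-1) ≤ A^(s-1) := by
    rcases le_total 1 s with h | h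
    · calc min 1 ((4:ℝ)^(s-1)) * (N:ℝ)^(s-1) ≤ 1 * (N:ℝ)^(s-1) := by
            gcongr; exact min_le_left _ _
        _ ≤ A^(s-1) := by rw [one_mul]; exact Real.rpow_le_rpow hN0.le hNA (by linarith)
    · calc min 1 ((4:ℝ)^(s-1)) * (N:ℝ)^(s-1) ≤ 4^(s-1) * (N:ℝ)^(s-1) := by
            gcongr; exact min_le_right _ _
        _ = (4 * N)^(s-1) := by rw [Real.mul_rpow (by norm_num) hN0.le]
        _ ≤ A^(s-1) := Real.rpow_le_rpow_of_nonpos hA0 hAN (by linarith)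
  have hlog0 : 0 ≤ Real.log N := Real.log_nonneg (by exact_mod_cast (by omega : 1 ≤ N))
  have hlog : Real.log N ≤ n := by
    calc Real.log N ≤ Real.log A := Real.log_le_log hN0 hNA
      _ = n * Real.log 2 := by rw [hA, Real.log_pow]
      _ ≤ n * 1 := by gcongr; linarith [Real.log_two_lt_d9]
      _ = n := mul_one _
  have main := aux_count e n p q s (discSeq (e+1) S N) ((K * A^(s-1))^q)
    (fun j hj => aux_term (e+1) p q s hp hq S N j n hj hlo)
  have main2 := ENNReal.rpow_le_rpow main (by positivity : 0 ≤ 1/q)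
  refine le_trans ?_ main2
  rw [ENNReal.ofReal_rpow_of_nonneg (by positivity) (by positivity)]
  apply ENNReal.ofReal_le_ofReal
  have e1 : (((n:ℝ)/(e+1:ℕ))^e * (K * A^(s-1))^q)^(1/q) =
      ((n:ℝ) ^ ((e:ℝ)/q) * ((e+1:ℕ):ℝ)⁻¹^((e:ℝ)/q)) * (K * A^(s-1)) := by
    rw [Real.mul_rpow (by positivity) (by positivity), ← Real.rpow_mul (by positivity),
      mul_one_div_cancel hq.ne', Real.rpow_one, ← Real.rpow_natCast,
      ← Real.rpow_mul (by positivity), mul_one_div, div_eq_mul_inv (n:ℝ),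
      Real.mul_rpow (by positivity) (by positivity)]
  rw [e1]
  have e2 : (((e+1:ℕ):ℝ) - 1)/q = (e:ℝ)/q := by push_cast; ring
  rw [e2]
  calc _ = (Real.log N ^ ((e:ℝ)/q) * ((e+1:ℕ):ℝ)⁻¹^((e:ℝ)/q)) *
        (K * (min 1 ((4:ℝ)^(s-1)) * (N:ℝ)^(s-1))) := by ring
    _ ≤ _ := by
      have : 0 ≤ min 1 ((4:ℝ)^(s-1)) := (lt_min one_pos h4).le
      gcongr

end
end

section
/- Let d ∈ ℕ and let S_d be an order 2 digital (t,d)-sequence over 𝔽_2 whose generating matrices E_i = (e_{i,k,ℓ})_{k,ℓ≥1} satisfy e_{i,k,ℓ} = 0 for all k > 2ℓ and all i ∈ {1,…,d}. Let N ≥ 2 have binary expansion N = 2^{n_r} + ⋯ + 2^{n_1} with n_r > … > n_1 ≥ 0, and set n_0 = 0 and n_{r+1} = log₂ N. There is a constant C depending only on d such that for every j ∈ ℕ_{−1}^d with n_μ ≤ |j| + t/2 < n_{μ+1} for some μ ∈ {0,1,…,r}, and every m ∈ 𝔻_j: |⟨D_{S_d}^N, h_{j,m}⟩| ≤ C ·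 2^t · N^{−1} · (2^{−|j|} + (2 n_{μ+1} − t − 2|j|)^{d−1} · 2^{−n_{μ+1}}). -/
open MeasureTheory
open scoped ENNReal

noncomputable section

namespace HaarLI

/-- Sign character of `𝔽₂`. -/
def sg (a : ZMod 2) : ℝ := if a = 0 then 1 else -1

lemma sg_zero : sg 0 = 1 := by simp [sg]

lemma zmod2_cases (a : ZMod 2) : a = 0 ∨ a = 1 := by
  revert a; decide

lemma sg_one : sg 1 = -1 := by
  have : (1 : ZMod 2) ≠ 0 := by decide
  simp [sg, this]

lemma sg_add (a b : ZMod 2) : sg (a + b) = sg a * sg b := by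
  have h11 : (1 : ZMod 2) + 1 = 0 := by decide
  rcases zmod2_cases a with rfl | rfl <;> rcases zmod2_cases b with rfl | rfl <;>
    simp [sg_zero, sg_one, h11]

lemma abs_sg (a : ZMod 2) : |sg a| = 1 := by
  rcases zmod2_cases a with rfl | rfl <;> simp [sg_zero, sg_one]

lemma sg_sum {ι : Type*} (s : Finset ι) (f : ι → ZMod 2) :
    sg (∑ i ∈ s, f i) = ∏ i ∈ s, sg (f i) := by
  classical
  induction s using Finset.induction_on with
  | empty => simp [sg_zero]
  | insert a s ha ih => rw [Finset.sum_insert ha, Finset.prod_insert ha, sg_add, ih]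

/-- Value of a binary digit expansion. -/
def val (y : ℕ → ZMod 2) : ℝ := ∑' i : ℕ, (((y i).val : ℕ) : ℝ) / 2 ^ (i + 1)

lemma zval_le (a : ZMod 2) : a.val ≤ 1 := by
  have := ZMod.val_lt a
  omega

lemma summable_half : Summable (fun i : ℕ => (1 : ℝ) / 2 ^ (i + 1)) := by
  have := (summable_geometric_two).mul_left (1 / 2 : ℝ)
  refine this.congr fun i => ?_
  rw [pow_succ, one_div_pow]; field_simp

lemma tsum_half : ∑' i : ℕ, (1 : ℝ) / 2 ^ (i + 1) = 1 := by
  have h := tsum_geometric_two' 1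
  refine Eq.trans (tsum_congr fun i => ?_) h
  rw [pow_succ]; field_simp

lemma summable_val (y : ℕ → ZMod 2) :
    Summable (fun i : ℕ => (((y i).val : ℕ) : ℝ) / 2 ^ (i + 1)) := by
  refine Summable.of_nonneg_of_le (fun i => by positivity) (fun i => ?_) summable_half
  have : (((y i).val : ℕ) : ℝ) ≤ 1 := by exact_mod_cast zval_le (y i)
  gcongr

lemma val_nonneg (y : ℕ → ZMod 2) : 0 ≤ val y := tsum_nonneg fun i => by positivity

lemma val_le_one (y : ℕ → ZMod 2) : val y ≤ 1 := by
  rw [← tsum_half]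
  refine (summable_val y).tsum_le_tsum (fun i => ?_) summable_half
  have : (((y i).val : ℕ) : ℝ) ≤ 1 := by exact_mod_cast zval_le (y i)
  gcongr

lemma val_shift (y : ℕ → ZMod 2) :
    val y = (((y 0).val : ℕ) + val (fun i => y (i + 1))) / 2 := by
  unfold val
  rw [(summable_val y).tsum_eq_zero_add, add_div, ← tsum_div_const]
  congr 1
  · simp
  · refine tsum_congr fun i => ?_
    rw [pow_succ 2 (i + 1)]; field_simp

/-- Integer formed by the first `J` digits. -/
def pre (y : ℕ → ZMod 2) : ℕ → ℕ
  | 0 => 0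
  | J + 1 => 2 * pre y J + (y J).val

lemma val_pre (y : ℕ → ZMod 2) (J : ℕ) :
    val y = ((pre y J : ℕ) + val (fun i => y (J + i))) / 2 ^ J := by
  induction J with
  | zero => simp [pre]
  | succ J ih =>
    rw [ih, val_shift (fun i => y (J + i)), pre]
    have : (fun i => y (J + (i + 1))) = (fun i => y (J + 1 + i)) := by
      funext i; congr 1; ring
    rw [this, pow_succ]
    push_cast
    simp only [add_zero]
    field_simp
    ring

lemma pre_eq_iff (J : ℕ) : ∀ m : ℕ, m < 2 ^ J → ∃ η : ℕ → ZMod 2, ∀ y : ℕ → ZMod 2,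
    (pre y J = m ↔ ∀ a < J, y a = η a) := by
  induction J with
  | zero =>
    intro m hm
    refine ⟨0, fun y => ?_⟩
    simp [pre]; simp at hm; exact hm.symm
  | succ J ih =>
    intro m hm
    obtain ⟨η, hη⟩ := ih (m / 2) (by rw [pow_succ] at hm; omega)
    refine ⟨fun a => if a = J then (m : ZMod 2) else η a, fun y => ?_⟩
    have hy := zval_le (y J)
    have h1 : pre y (J + 1) = m ↔ pre y J = m / 2 ∧ (y J).val = m % 2 := by
      simp only [pre]; omega
    have h2 : (y J).val = m % 2 ↔ y J = (m : ZMod 2) := by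
      rw [← ZMod.val_natCast 2 m]
      exact ⟨fun h => ZMod.val_injective 2 h, fun h => by rw [h]⟩
    rw [h1, h2, hη]
    constructor
    · rintro ⟨h, h'⟩ a ha
      by_cases haJ : a = J
      · simp [haJ, h']
      · simp only [haJ, if_false]; exact h a (by omega)
    · intro h
      refine ⟨fun a ha => ?_, ?_⟩
      · have := h a (by omega)
        have haJ : a ≠ J := by omega
        simpa only [haJ, if_false] using this
      · have := h J (by omega)
        simpa only [if_true] using this

/-- One-dimensional building block: integral of the Haar function against `1_{z<x}`. -/
def phi (j : ℤ) (m : ℕ) (z : ℝ) : ℝ :=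
  ∫ x in Set.Icc (0:ℝ) 1, (if z < x then 1 else 0) * haar1 j m x

/-- One-dimensional building block: integral of the Haar function against `x`. -/
def itg (j : ℤ) (m : ℕ) : ℝ := ∫ x in Set.Icc (0:ℝ) 1, x * haar1 j m x

lemma int_step (p q z : ℝ) (hp : 0 ≤ p) (hpq : p ≤ q) (hq : q ≤ 1) :
    ∫ x in Set.Icc (0:ℝ) 1, (if z < x then (1:ℝ) else 0) * (Set.Ico p q).indicator 1 x
      = max q z - max p z := by
  have h1 : (fun x => (if z < x then (1:ℝ) else 0) * (Set.Ico p q).indicator 1 x)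
      = (Set.Ioi z ∩ Set.Ico p q).indicator 1 := by
    funext x
    by_cases h : z < x <;> by_cases h' : x ∈ Set.Ico p q <;> simp [Set.indicator, h, h']
  have hm : MeasurableSet (Set.Ioi z ∩ Set.Ico p q) := measurableSet_Ioi.inter measurableSet_Ico
  rw [h1, integral_indicator_one hm, measureReal_restrict_apply hm]
  have hs : Set.Ioi z ∩ Set.Ico p q ∩ Set.Icc 0 1 = Set.Ioi z ∩ Set.Ico p q := by
    apply Set.inter_eq_left.2
    rintro x ⟨_, h2, h3⟩
    exact ⟨by linarith, by linarith⟩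
  have hle : max p z ≤ max q z := max_le_max hpq le_rfl
  have hv : volume (Set.Ioi z ∩ Set.Ico p q) = ENNReal.ofReal (max q z - max p z) := by
    apply le_antisymm
    · rw [← Real.volume_Icc]
      refine measure_mono ?_
      rintro x ⟨h1, h2, h3⟩
      exact ⟨max_le h2 (le_of_lt h1), le_max_of_le_left h3.le⟩
    · rw [← Real.volume_Ioo]
      refine measure_mono ?_
      rintro x ⟨h1, h2⟩
      have h3 := lt_of_le_of_lt (le_max_left _ _) h1
      have h4 := lt_of_le_of_lt (le_max_right _ _) h1
      refine ⟨h4, h3.le, ?_⟩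
      rcases lt_max_iff.1 h2 with h | h
      · exact h
      · exact absurd h4 (not_lt.2 h.le)
  rw [hs, measureReal_def, hv, ENNReal.toReal_ofReal (by linarith)]

lemma int_id (p q : ℝ) (hp : 0 ≤ p) (hpq : p ≤ q) (hq : q ≤ 1) :
    ∫ x in Set.Icc (0:ℝ) 1, x * (Set.Ico p q).indicator 1 x = (q ^ 2 - p ^ 2) / 2 := by
  have h1 : (fun x => x * (Set.Ico p q).indicator (1 : ℝ → ℝ) x)
      = (Set.Ico p q).indicator (fun x => x) := by
    funext x
    by_cases h' : x ∈ Set.Ico p q <;> simp [Set.indicator, h']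
  rw [h1, setIntegral_indicator measurableSet_Ico]
  have hs : Set.Icc 0 1 ∩ Set.Ico p q = Set.Ico p q := by
    apply Set.inter_eq_right.2
    rintro x ⟨h2, h3⟩
    exact ⟨by linarith, by linarith⟩
  rw [hs, integral_Ico_eq_integral_Ioc, ← intervalIntegral.integral_of_le hpq, integral_id]

lemma haar1_neg (m : ℕ) : haar1 (-1) m = (Set.Ico (0:ℝ) 1).indicator 1 := by
  funext x
  simp [haar1, Set.indicator, Set.mem_Ico]

lemma haar1_nat (J m : ℕ) (x : ℝ) : haar1 (J : ℤ) m x =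
    (Set.Ico ((m:ℝ)/2^J) (((m:ℝ) + 1/2)/2^J)).indicator 1 x -
    (Set.Ico (((m:ℝ) + 1/2)/2^J) (((m:ℝ)+1)/2^J)).indicator 1 x := by
  have h : (J : ℤ) ≠ -1 := by omega
  simp only [haar1, h, if_false, Int.toNat_natCast, Set.indicator, Set.mem_Ico, Pi.one_apply]
  by_cases h1 : (m:ℝ)/2^J ≤ x ∧ x < ((m:ℝ) + 1/2)/2^J
  · have h2 : ¬ (((m:ℝ) + 1/2)/2^J ≤ x ∧ x < ((m:ℝ)+1)/2^J) := fun h => by linarith [h.1, h1.2]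
    rw [if_pos h1, if_pos h1, if_neg h2]; ring
  · rw [if_neg h1, if_neg h1]
    split_ifs <;> ring

lemma integrable_bdd (f : ℝ → ℝ) (hf : Measurable f) (C : ℝ) (hC : ∀ x ∈ Set.Icc (0:ℝ) 1, |f x| ≤ C) :
    Integrable f (volume.restrict (Set.Icc (0:ℝ) 1)) := by
  refine Measure.integrableOn_of_bounded (M := C) (by simp) hf.aestronglyMeasurable ?_
  filter_upwards [ae_restrict_mem measurableSet_Icc] with x hx
  exact hC x hx

lemma measurable_haar1 (j : ℤ) (hj : -1 ≤ j) (m : ℕ) : Measurable (haar1 j m) := by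
  by_cases h : j = -1
  · subst h; rw [haar1_neg]; exact measurable_one.indicator measurableSet_Ico
  · obtain ⟨J, rfl⟩ := Int.eq_ofNat_of_zero_le (show 0 ≤ j by omega)
    have : haar1 (J : ℤ) m = _ := funext (haar1_nat J m)
    rw [this]
    exact (measurable_one.indicator measurableSet_Ico).sub
      (measurable_one.indicator measurableSet_Ico)

lemma abs_haar1 (j : ℤ) (m : ℕ) (x : ℝ) : |haar1 j m x| ≤ 1 := by
  unfold haar1
  split_ifs <;> simp

lemma measurable_step (z : ℝ) : Measurable (fun x : ℝ => if z < x then (1:ℝ) else 0) :=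
  Measurable.ite measurableSet_Ioi measurable_const measurable_const

lemma integrable_phi (j : ℤ) (hj : -1 ≤ j) (m : ℕ) (z : ℝ) :
    Integrable (fun x => (if z < x then (1:ℝ) else 0) * haar1 j m x)
      (volume.restrict (Set.Icc (0:ℝ) 1)) := by
  refine integrable_bdd _ ((measurable_step z).mul (measurable_haar1 j hj m)) 1 fun x _ => ?_
  split_ifs <;> simp [abs_haar1]

lemma integrable_itg (j : ℤ) (hj : -1 ≤ j) (m : ℕ) :
    Integrable (fun x => x * haar1 j m x) (volume.restrict (Set.Icc (0:ℝ) 1)) := by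
  refine integrable_bdd _ (measurable_id.mul (measurable_haar1 j hj m)) 1 fun x hx => ?_
  rw [abs_mul, abs_of_nonneg hx.1]
  exact mul_le_one₀ hx.2 (abs_nonneg _) (abs_haar1 _ _ _)

lemma phi_neg (m : ℕ) (z : ℝ) (h0 : 0 ≤ z) (h1 : z ≤ 1) : phi (-1) m z = 1 - z := by
  unfold phi
  rw [haar1_neg, int_step 0 1 z le_rfl zero_le_one le_rfl, max_eq_left h1, max_eq_right h0]

lemma itg_neg (m : ℕ) : itg (-1) m = 1 / 2 := by
  unfold itg
  rw [haar1_neg, int_id 0 1 le_rfl zero_le_one le_rfl]; norm_num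

lemma dy_bounds (J m : ℕ) (hm : m < 2 ^ J) :
    0 ≤ (m:ℝ)/2^J ∧ (m:ℝ)/2^J ≤ ((m:ℝ) + 1/2)/2^J ∧
    ((m:ℝ) + 1/2)/2^J ≤ ((m:ℝ)+1)/2^J ∧ ((m:ℝ)+1)/2^J ≤ 1 := by
  have : (m:ℝ) + 1 ≤ 2 ^ J := by exact_mod_cast hm
  refine ⟨by positivity, by gcongr; linarith, by gcongr; linarith, ?_⟩
  rw [div_le_one (by positivity)]; exact this

lemma integrable_ind_mul (f : ℝ → ℝ) (hf : Measurable f) (hb : ∀ x ∈ Set.Icc (0:ℝ) 1, |f x| ≤ 1)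
    (p q : ℝ) :
    Integrable (fun x => f x * (Set.Ico p q).indicator 1 x)
      (volume.restrict (Set.Icc (0:ℝ) 1)) := by
  refine integrable_bdd _ (hf.mul (measurable_one.indicator measurableSet_Ico)) 1 fun x hx => ?_
  rw [abs_mul]
  refine mul_le_one₀ (hb x hx) (abs_nonneg _) ?_
  unfold Set.indicator; split_ifs <;> simp

lemma phi_nat (J m : ℕ) (hm : m < 2 ^ J) (z : ℝ) : phi (J : ℤ) m z =
    2 * max (((m:ℝ) + 1/2)/2^J) z - max ((m:ℝ)/2^J) z - max (((m:ℝ) + 1)/2^J) z := by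
  obtain ⟨h1, h2, h3, h4⟩ := dy_bounds J m hm
  unfold phi
  simp only [haar1_nat, mul_sub]
  have hb : ∀ x ∈ Set.Icc (0:ℝ) 1, |(if z < x then (1:ℝ) else 0)| ≤ 1 := fun x _ => by
    split_ifs <;> simp
  rw [integral_sub (integrable_ind_mul _ (measurable_step z) hb _ _)
    (integrable_ind_mul _ (measurable_step z) hb _ _),
    int_step _ _ _ h1 h2 (by linarith), int_step _ _ _ (by linarith) h3 h4]
  ring

lemma itg_nat (J m : ℕ) (hm : m < 2 ^ J) : itg (J : ℤ) m = -(1 / 4) / 2 ^ J / 2 ^ J := by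
  obtain ⟨h1, h2, h3, h4⟩ := dy_bounds J m hm
  unfold itg
  simp only [haar1_nat, mul_sub]
  have hb : ∀ x ∈ Set.Icc (0:ℝ) 1, |x| ≤ 1 := fun x hx => by
    rw [abs_of_nonneg hx.1]; exact hx.2
  rw [integral_sub (integrable_ind_mul (fun x => x) measurable_id hb _ _)
    (integrable_ind_mul (fun x => x) measurable_id hb _ _),
    int_id _ _ h1 h2 (by linarith), int_id _ _ (by linarith) h3 h4]
  field_simp
  ring

end HaarLI

namespace HaarLI

lemma half_sub_val (L : ℕ) (y : ℕ → ZMod 2) : 1 / 2 - val y =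
    ∑ i ∈ Finset.range L, sg (y i) / 2 ^ (i + 2) + (1 / 2 - val (fun i => y (L + i))) / 2 ^ L := by
  induction L with
  | zero => simp
  | succ L ih =>
    rw [ih, Finset.sum_range_succ, val_shift (fun i => y (L + i))]
    have : (fun i => y (L + (i + 1))) = (fun i => y (L + 1 + i)) := by
      funext i; congr 1; ring
    rw [this, add_assoc]
    congr 1
    simp only [add_zero]
    have h1 : ((1 : ZMod 2).val : ℝ) = 1 := by
      have : (1 : ZMod 2).val = 1 := by decide
      rw [this]; simp
    rcases zmod2_cases (y L) with h | h
    · rw [h, sg_zero, ZMod.val_zero, pow_add, pow_succ]; field_simp; push_cast; ring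
    · rw [h, sg_one, h1, pow_add, pow_succ]; field_simp; ring

lemma abs_half_sub_val (y : ℕ → ZMod 2) : |1 / 2 - val y| ≤ 1 / 2 := by
  have h0 := val_nonneg y
  have h1 := val_le_one y
  rw [abs_le]; constructor <;> linarith

lemma phi_val (J m : ℕ) (hm : m < 2 ^ J) (y : ℕ → ZMod 2) : phi (J : ℤ) m (val y) =
    (if pre y J = m then 1 else 0) *
      ((-(1/4) + sg (y J) * (1 / 2 - val (fun i => y (J + 1 + i))) / 2) / 2 ^ J) := by
  rw [phi_nat J m hm, val_pre y J]
  have hu0 := val_nonneg (fun i => y (J + i))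
  have hu1 := val_le_one (fun i => y (J + i))
  have hpow : (0:ℝ) < 2 ^ J := by positivity
  by_cases h : pre y J = m
  · rw [if_pos h, h, one_mul, max_eq_right (a := (m:ℝ) / 2 ^ J) (by gcongr; linarith),
      max_eq_left (a := ((m:ℝ) + 1) / 2 ^ J) (by gcongr)]
    have hs := val_shift (fun i => y (J + i))
    have : (fun i => y (J + (i + 1))) = (fun i => y (J + 1 + i)) := by
      funext i; congr 1; ring
    rw [this] at hs
    have hv0 := val_nonneg (fun i => y (J + 1 + i))
    have hv1 := val_le_one (fun i => y (J + 1 + i))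
    simp only [add_zero] at hs
    have h1 : ((1 : ZMod 2).val : ℝ) = 1 := by
      have : (1 : ZMod 2).val = 1 := by decide
      rw [this]; simp
    rcases zmod2_cases (y J) with h' | h'
    · rw [h', ZMod.val_zero] at hs
      push_cast at hs
      rw [h', sg_zero, hs, max_eq_left (by gcongr; linarith)]
      field_simp; ring
    · rw [h', h1] at hs
      rw [h', sg_one, hs, max_eq_right (by gcongr; linarith)]
      field_simp; ring
  · rw [if_neg h, zero_mul]
    rcases lt_or_gt_of_ne h with h | h
    · have h' : ((pre y J : ℕ) : ℝ) + 1 ≤ m := by exact_mod_cast h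
      rw [max_eq_left, max_eq_left, max_eq_left]
      · field_simp; ring
      all_goals exact div_le_div_of_nonneg_right (by linarith) hpow.le
    · have h' : (m : ℝ) + 1 ≤ (pre y J : ℕ) := by exact_mod_cast h
      rw [max_eq_right, max_eq_right, max_eq_right]
      · ring
      all_goals exact div_le_div_of_nonneg_right (by linarith) hpow.le

/-- Finite Walsh-type expansion of the one-dimensional building block, with a remainder stored
as the last term. -/
lemma expand (j : ℤ) (hj : -1 ≤ j) (m : ℕ) (hm : m < 2 ^ j.toNat) (L : ℕ) :
    ∃ (c : ℕ → (ℕ → ZMod 2) → ℝ) (κ : ℕ → ℝ) (T : ℕ → Finset ℕ),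
      (∀ y, phi j m (val y) = (if pre y j.toNat = m then 1 else 0) *
        ∑ b ∈ Finset.range (L + 3), c b y) ∧
      (∀ b y, |c b y| ≤ 1 / 2 ^ j.toNat / 2 ^ b) ∧
      κ 0 = 2 ^ j.toNat * itg j m ∧
      T 0 = ∅ ∧
      (∀ b, b < L + 2 → ∀ y, c b y = κ b * sg (∑ x ∈ T b, y x)) ∧
      (∀ b, b ≠ 0 → κ b = 0 ∨ (T b).Nonempty) ∧
      (∀ b, ∀ x ∈ T b, j.toNat ≤ x ∧ x + 1 ≤ j.toNat + b ∧
        (x + 1 = j.toNat + b ∨ x ≤ j.toNat)) := by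
  by_cases h : j = -1
  · subst h
    have hJ : (-1 : ℤ).toNat = 0 := rfl
    rw [hJ] at hm ⊢
    have hm0 : m = 0 := by simpa using hm
    refine ⟨fun b y => if b = 0 then 1 / 2 else if b < L + 2 then sg (y (b - 1)) / 2 ^ (b + 1)
      else if b = L + 2 then (1 / 2 - val (fun i => y (L + 1 + i))) / 2 ^ (L + 1) else 0,
      fun b => if b = 0 then 1 / 2 else 1 / 2 ^ (b + 1),
      fun b => if b = 0 then ∅ else {b - 1}, ?_, ?_, ?_, ?_, ?_, ?_, ?_⟩
    · intro y
      rw [phi_neg _ _ (val_nonneg y) (val_le_one y), hm0]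
      simp only [pre, if_true, one_mul]
      rw [Finset.sum_range_succ, Finset.sum_range_succ']
      have h1 : ∀ i ∈ Finset.range (L + 1), (if i + 1 = 0 then (1:ℝ) / 2 else
          if i + 1 < L + 2 then sg (y (i + 1 - 1)) / 2 ^ (i + 1 + 1)
          else if i + 1 = L + 2 then (1 / 2 - val (fun i => y (L + 1 + i))) / 2 ^ (L + 1) else 0)
          = sg (y i) / 2 ^ (i + 2) := by
        intro i hi
        have := Finset.mem_range.1 hi
        rw [if_neg (by omega), if_pos (by omega)]; simp
      rw [Finset.sum_congr rfl h1]
      have h2 := half_sub_val (L + 1) y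
      simp only [if_true, Nat.succ_ne_zero, if_false, lt_irrefl]
      norm_num
      linarith
    · intro b y
      dsimp only
      split_ifs with h1 h2 h3
      · subst h1; norm_num
      · rw [abs_div, abs_sg, abs_of_pos (by positivity : (0:ℝ) < 2 ^ (b + 1)), pow_zero, div_one]
        gcongr <;> simp
      · subst h3
        rw [abs_div, abs_of_pos (by positivity : (0:ℝ) < 2 ^ (L + 1)), pow_zero, div_one]
        have := abs_half_sub_val (fun i => y (L + 1 + i))
        rw [div_le_div_iff₀ (by positivity) (by positivity), pow_succ 2 (L + 1)]
        have h2 : (0:ℝ) < 2 ^ (L + 1) := by positivity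
        nlinarith
      · simp
    · simp [itg_neg]
    · simp
    · intro b hb y
      by_cases h0 : b = 0
      · simp [h0, sg_zero]
      · simp only [h0, if_false, hb, if_true, Finset.sum_singleton]; ring
    · intro b hb; right; simp [hb]
    · intro b x hx
      dsimp only at hx
      split_ifs at hx with h0
      · simp at hx
      · rw [Finset.mem_singleton] at hx; omega
  · obtain ⟨J, rfl⟩ := Int.eq_ofNat_of_zero_le (show 0 ≤ j by omega)
    rw [Int.toNat_natCast] at hm ⊢
    refine ⟨fun b y => if b = 0 then -(1 / 4) / 2 ^ J else if b = 1 then 0 else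
      if b < L + 2 then sg (y J) * sg (y (J + b - 1)) / 2 ^ (b + 1) / 2 ^ J
      else if b = L + 2 then
        sg (y J) * (1 / 2 - val (fun i => y (J + 1 + (L + i)))) / 2 ^ L / 2 / 2 ^ J else 0,
      fun b => if b = 0 then -(1 / 4) / 2 ^ J else if b = 1 then 0 else 1 / 2 ^ (b + 1) / 2 ^ J,
      fun b => if b = 0 then ∅ else if b = 1 then ∅ else {J, J + b - 1},
      ?_, ?_, ?_, ?_, ?_, ?_, ?_⟩
    · intro y
      rw [phi_val J m hm]
      congr 1
      rw [Finset.sum_range_succ, Finset.sum_range_succ', Finset.sum_range_succ']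
      have h1 : ∀ i ∈ Finset.range L, (if i + 1 + 1 = 0 then -(1 / 4) / (2:ℝ) ^ J else
        if i + 1 + 1 = 1 then 0 else
        if i + 1 + 1 < L + 2 then sg (y J) * sg (y (J + (i + 1 + 1) - 1)) / 2 ^ (i + 1 + 1 + 1) / 2 ^ J
        else if i + 1 + 1 = L + 2 then
        sg (y J) * (1 / 2 - val (fun i => y (J + 1 + (L + i)))) / 2 ^ L / 2 / 2 ^ J else 0)
          = sg (y J) / 2 / 2 ^ J * (sg (y (J + 1 + i)) / 2 ^ (i + 2)) := by
        intro i hi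
        have := Finset.mem_range.1 hi
        have h3 : J + (i + 1 + 1) - 1 = J + 1 + i := by omega
        rw [if_neg (by omega), if_neg (by omega), if_pos (by omega), h3, pow_succ 2 (i + 1 + 1)]
        field_simp
      rw [Finset.sum_congr rfl h1, ← Finset.mul_sum]
      have h2 := half_sub_val L (fun i => y (J + 1 + i))
      rw [h2]
      simp only [if_true, Nat.succ_ne_zero, if_false, lt_irrefl, zero_add]
      have h4 : ¬ (L + 2 = 1) := by omega
      simp only [h4, if_false]
      norm_num
      field_simp
      ring
    · intro b y
      dsimp only
      split_ifs with h1 h2 h3 h4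
      · subst h1
        rw [abs_div, abs_of_pos (by positivity : (0:ℝ) < 2 ^ J), pow_zero, div_one]
        gcongr; norm_num [abs_of_neg]
      · rw [abs_zero]; positivity
      · rw [abs_div, abs_div, abs_mul, abs_sg, abs_sg, abs_of_pos (by positivity : (0:ℝ) < 2 ^ J),
          abs_of_pos (by positivity : (0:ℝ) < 2 ^ (b + 1)), div_right_comm]
        gcongr <;> simp
      · subst h4
        rw [abs_div, abs_div, abs_div, abs_mul, abs_sg,
          abs_of_pos (by positivity : (0:ℝ) < 2 ^ J),
          abs_of_pos (by positivity : (0:ℝ) < 2 ^ L), div_right_comm (1:ℝ)]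
        have := abs_half_sub_val (fun i => y (J + 1 + (L + i)))
        refine div_le_div_of_nonneg_right ?_ (by positivity)
        rw [abs_of_pos (by norm_num : (0:ℝ) < 2), div_div, div_le_div_iff₀ (by positivity) (by positivity), pow_add 2 L]
        have h2 : (0:ℝ) < 2 ^ L := by positivity
        norm_num
        nlinarith
      · rw [abs_zero]; positivity
    · rw [itg_nat J m hm]; simp only [if_true]; field_simp
    · simp
    · intro b hb y
      by_cases h0 : b = 0
      · simp [h0, sg_zero]
      by_cases h1 : b = 1
      · simp [h1]
      simp only [h0, h1, if_false, hb, if_true]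
      rw [Finset.sum_pair (by omega), sg_add]; ring
    · intro b hb
      by_cases h1 : b = 1
      · left; simp [h1]
      · right; simp [hb, h1]
    · intro b x hx
      dsimp only at hx
      split_ifs at hx with h0 h1
      · simp at hx
      · simp at hx
      · simp only [Finset.mem_insert, Finset.mem_singleton] at hx; omega

end HaarLI

namespace HaarLI

/-- Digits of the points of a digital sequence. -/
def dig {d : ℕ} (E : Fin d → ℕ → ℕ → ZMod 2) (k : ℕ) (i : Fin d) (x : ℕ) : ZMod 2 :=
  ∑ ℓ ∈ Finset.range (k+1), E i x ℓ * (if k.testBit ℓ then 1 else 0)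

lemma digitalSeq_eq {d : ℕ} (E : Fin d → ℕ → ℕ → ZMod 2) (k : ℕ) (i : Fin d) :
    digitalSeq d E k i = val (dig E k i) := rfl

lemma bit_sum_le (v : ℕ → ZMod 2) (k K K' : ℕ) (h : K ≤ K') (hk : k < 2 ^ K) :
    ∑ ℓ ∈ Finset.range K, v ℓ * (if k.testBit ℓ then 1 else 0) =
    ∑ ℓ ∈ Finset.range K', v ℓ * (if k.testBit ℓ then 1 else 0) := by
  refine Finset.sum_subset (Finset.range_mono h) fun x _ hx => ?_
  have hx' : K ≤ x := by simpa using hx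
  have : k.testBit x = false :=
    Nat.testBit_lt_two_pow (lt_of_lt_of_le hk (Nat.pow_le_pow_right (by norm_num) hx'))
  simp [this]

lemma dig_eq {d : ℕ} (E : Fin d → ℕ → ℕ → ZMod 2) (k : ℕ) (i : Fin d) (x K : ℕ) (hk : k < K) :
    dig E k i x = ∑ ℓ ∈ Finset.range K, E i x ℓ * (if k.testBit ℓ then 1 else 0) :=
  bit_sum_le _ _ _ _ hk (lt_trans (Nat.lt_succ_self k) Nat.lt_two_pow_self)

/-- Aligned dyadic block of indices. -/
def blk (c n : ℕ) : Finset ℕ := Finset.Ico (c * 2 ^ n) ((c + 1) * 2 ^ n)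

lemma mem_blk {c n k : ℕ} : k ∈ blk c n ↔ k / 2 ^ n = c := by
  have : 0 < 2 ^ n := by positivity
  rw [blk, Finset.mem_Ico, Nat.div_eq_iff this, add_mul, one_mul]
  omega

lemma card_blk (c n : ℕ) : (blk c n).card = 2 ^ n := by
  rw [blk, Nat.card_Ico, add_mul]; omega

lemma char_sum (v : ℕ → ZMod 2) (c n K ℓ₀ : ℕ) (hℓ : ℓ₀ < n) (hK : ℓ₀ < K) (hv : v ℓ₀ = 1) :
    ∑ k ∈ blk c n, sg (∑ ℓ ∈ Finset.range K, v ℓ * (if k.testBit ℓ then 1 else 0)) = 0 := by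
  have key : ∀ k : ℕ, sg (∑ ℓ ∈ Finset.range K, v ℓ * (if (k ^^^ 2 ^ ℓ₀).testBit ℓ then 1 else 0))
      = - sg (∑ ℓ ∈ Finset.range K, v ℓ * (if k.testBit ℓ then 1 else 0)) := by
    intro k
    have h1 : ∀ ℓ, (if (k ^^^ 2 ^ ℓ₀).testBit ℓ then (1 : ZMod 2) else 0) =
        (if k.testBit ℓ then 1 else 0) + (if ℓ = ℓ₀ then 1 else 0) := by
      intro ℓ
      have h11 : (1 : ZMod 2) + 1 = 0 := by decide
      rw [Nat.testBit_xor, Nat.testBit_two_pow]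
      by_cases h : ℓ₀ = ℓ
      · subst h; cases k.testBit ℓ₀ <;> simp [h11]
      · have h' : ¬ ℓ = ℓ₀ := fun e => h e.symm
        cases k.testBit ℓ <;> simp [h, h']
    simp only [h1, mul_add, Finset.sum_add_distrib]
    rw [sg_add]
    have h2 : ∑ ℓ ∈ Finset.range K, v ℓ * (if ℓ = ℓ₀ then 1 else 0) = 1 := by
      rw [Finset.sum_eq_single ℓ₀]
      · simp [hv]
      · intro b _ hb; simp [hb]
      · intro h; simp at h; omega
    rw [h2, sg_one]; ring
  refine Finset.sum_involution (fun k _ => k ^^^ 2 ^ ℓ₀) ?_ ?_ ?_ ?_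
  · intro k _; rw [key]; ring
  · intro k _ _ h
    have := congrArg (fun a => a.testBit ℓ₀) h
    simp at this
  · intro k hk
    rw [mem_blk] at hk ⊢
    rw [← hk]
    apply Nat.eq_of_testBit_eq
    intro i
    rw [Nat.testBit_div_two_pow, Nat.testBit_div_two_pow, Nat.testBit_xor, Nat.testBit_two_pow]
    have : ¬ ℓ₀ = i + n := by omega
    have : ¬ ℓ₀ = n + i := by omega
    simp [*]
  · intro k _; simp

lemma weight_le {ν : ℕ} (r : Fin ν → ℕ) (hr : StrictAnti r) (A C : ℕ)
    (h : ∀ l, r l + 1 ≤ A ∧ (r l + 1 = A ∨ r l + 1 ≤ C)) :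
    ∑ l ∈ Finset.univ.filter (fun l : Fin ν => (l:ℕ) < 2), (r l + 1) ≤ A + C := by
  let g : ℕ → ℕ := fun x => if x = 0 then A else C
  calc ∑ l ∈ Finset.univ.filter (fun l : Fin ν => (l:ℕ) < 2), (r l + 1)
      ≤ ∑ l ∈ Finset.univ.filter (fun l : Fin ν => (l:ℕ) < 2), g (l : ℕ) := by
        refine Finset.sum_le_sum fun l _ => ?_
        by_cases h0 : (l : ℕ) = 0
        · simp only [g, h0, if_true]; exact (h l).1
        · simp only [g, h0, if_false]
          have hlt : r l < r ⟨0, by omega⟩ := hr (by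
            rw [Fin.lt_def]; exact Nat.pos_of_ne_zero h0)
          have := (h ⟨0, by omega⟩).1
          rcases (h l).2 with h2 | h2
          · omega
          · exact h2
    _ = ∑ x ∈ (Finset.univ.filter (fun l : Fin ν => (l:ℕ) < 2)).image Fin.val, g x := by
        rw [Finset.sum_image]
        intro a _ b _ hab; exact Fin.ext hab
    _ ≤ ∑ x ∈ Finset.range 2, g x := by
        refine Finset.sum_le_sum_of_subset ?_
        intro x hx
        simp only [Finset.mem_image, Finset.mem_filter] at hx
        obtain ⟨l, ⟨_, hl⟩, rfl⟩ := hx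
        exact Finset.mem_range.2 hl
    _ = A + C := by simp [Finset.sum_range_succ, g]

lemma net_indep {d n t : ℕ} {E : Fin d → ℕ → ℕ → ZMod 2} (hE : IsOrderNet 2 n t (2 * n) d E)
    (T : Fin d → Finset ℕ) (J b : Fin d → ℕ)
    (hT : ∀ i, ∀ x ∈ T i, x + 1 ≤ J i + b i ∧ (x + 1 = J i + b i ∨ x + 1 ≤ J i + min (b i) 1))
    (hw : ∑ i, ((J i + b i) + (J i + min (b i) 1)) ≤ 2 * n - t)
    (hne : ∃ i, (T i).Nonempty) :
    ∃ ℓ < n, ∑ i, ∑ x ∈ T i, E i x ℓ = 1 := by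
  have hmem : ∀ i (l : Fin (T i).card), (T i).orderEmbOfFin rfl (Fin.rev l) ∈ T i :=
    fun i l => Finset.orderEmbOfFin_mem _ _ _
  have hanti : ∀ i, StrictAnti (fun l : Fin (T i).card => (T i).orderEmbOfFin rfl (Fin.rev l)) :=
    fun i a b hab => (OrderEmbedding.strictMono _) (Fin.rev_lt_rev.2 hab)
  have hind := hE (fun i => (T i).card) (fun i l => (T i).orderEmbOfFin rfl (Fin.rev l)) hanti
    (by
      intro i l
      have h1 := (hT i _ (hmem i l)).1
      have h2 : (J i + b i) + (J i + min (b i) 1) ≤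
          ∑ i, ((J i + b i) + (J i + min (b i) 1)) :=
        Finset.single_le_sum (f := fun i => (J i + b i) + (J i + min (b i) 1))
          (fun _ _ => Nat.zero_le _) (Finset.mem_univ i)
      omega)
    (by
      refine le_trans (Finset.sum_le_sum fun i _ => ?_) hw
      exact weight_le _ (hanti i) _ _ fun l => hT i _ (hmem i l))
  by_contra hcon
  push Not at hcon
  rw [Fintype.linearIndependent_iff] at hind
  have hz := hind (fun _ => 1) (by
    funext col
    rw [Finset.sum_apply]
    simp only [one_smul, Pi.zero_apply]
    rw [Fintype.sum_sigma]
    have h1 : ∀ i, ∑ l : Fin (T i).card, E i ((T i).orderEmbOfFin rfl (Fin.rev l)) col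
        = ∑ x ∈ T i, E i x col := by
      intro i
      rw [← Equiv.sum_comp Fin.revPerm]
      simp only [Fin.revPerm_apply, Fin.rev_rev]
      conv_rhs => rw [← Finset.image_orderEmbOfFin_univ (T i) rfl]
      rw [Finset.sum_image]
      intro a _ b _ hab; exact ((T i).orderEmbOfFin rfl).injective hab
    simp only [h1]
    rcases zmod2_cases (∑ i, ∑ x ∈ T i, E i x col) with h | h
    · exact h
    · exact absurd h (hcon col col.2))
  obtain ⟨i, hi⟩ := hne
  have := hz ⟨i, ⟨0, Finset.card_pos.2 hi⟩⟩
  exact absurd this (by decide)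

lemma net_char {d n t : ℕ} {E : Fin d → ℕ → ℕ → ZMod 2} (hE : IsOrderNet 2 n t (2 * n) d E)
    (T : Fin d → Finset ℕ) (J b : Fin d → ℕ)
    (hT : ∀ i, ∀ x ∈ T i, x + 1 ≤ J i + b i ∧ (x + 1 = J i + b i ∨ x + 1 ≤ J i + min (b i) 1))
    (hw : ∑ i, ((J i + b i) + (J i + min (b i) 1)) ≤ 2 * n - t)
    (hne : ∃ i, (T i).Nonempty) (c : ℕ) :
    ∑ k ∈ blk c n, ∏ i, sg (∑ x ∈ T i, dig E k i x) = 0 := by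
  obtain ⟨ℓ, hℓ, h1⟩ := net_indep hE T J b hT hw hne
  have hK : ℓ < n + (c + 1) * 2 ^ n := by omega
  rw [← char_sum (fun ℓ => ∑ i, ∑ x ∈ T i, E i x ℓ) c n (n + (c + 1) * 2 ^ n) ℓ hℓ hK h1]
  refine Finset.sum_congr rfl fun k hk => ?_
  have hk' : k < n + (c + 1) * 2 ^ n := by
    rw [blk, Finset.mem_Ico] at hk; omega
  rw [← sg_sum]
  congr 1
  simp only [dig_eq E k _ _ _ hk', Finset.sum_mul]
  rw [Finset.sum_comm]
  refine Finset.sum_congr rfl fun i _ => ?_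
  rw [Finset.sum_comm]

lemma ind_expand (J m : ℕ) (hm : m < 2 ^ J) : ∃ α : Finset ℕ → ℝ, α ∅ = 1 ∧
    ∀ y : ℕ → ZMod 2, (if pre y J = m then (1:ℝ) else 0) =
      1 / 2 ^ J * ∑ S ∈ (Finset.range J).powerset, α S * sg (∑ x ∈ S, y x) := by
  obtain ⟨η, hη⟩ := pre_eq_iff J m hm
  refine ⟨fun S => sg (∑ x ∈ S, η x), by simp [sg_zero], fun y => ?_⟩
  have h1 : ∑ S ∈ (Finset.range J).powerset, sg (∑ x ∈ S, η x) * sg (∑ x ∈ S, y x) =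
      ∏ x ∈ Finset.range J, (1 + sg (η x + y x)) := by
    rw [Finset.prod_one_add]
    refine Finset.sum_congr rfl fun S _ => ?_
    rw [← sg_add, ← Finset.sum_add_distrib, sg_sum]
  rw [h1]
  have h11 : (1 : ZMod 2) + 1 = 0 := by decide
  by_cases h : pre y J = m
  · rw [if_pos h]
    have h2 := (hη y).1 h
    have h3 : ∏ x ∈ Finset.range J, (1 + sg (η x + y x)) = ∏ x ∈ Finset.range J, (2:ℝ) := by
      refine Finset.prod_congr rfl fun x hx => ?_
      rw [h2 x (Finset.mem_range.1 hx)]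
      have h4 : η x + η x = 0 := by
        rcases zmod2_cases (η x) with h | h <;> rw [h]
        · simp
        · exact h11
      rw [h4, sg_zero]; norm_num
    rw [h3]; simp
  · rw [if_neg h]
    have h2 : ¬ ∀ a < J, y a = η a := fun h' => h ((hη y).2 h')
    push Not at h2
    obtain ⟨a, ha, hne⟩ := h2
    rw [Finset.prod_eq_zero (Finset.mem_range.2 ha), mul_zero]
    rcases zmod2_cases (η a) with h | h <;> rcases zmod2_cases (y a) with h' | h' <;>
      simp_all [sg_one]

lemma box_char {d n t : ℕ} {E : Fin d → ℕ → ℕ → ZMod 2} (hE : IsOrderNet 2 n t (2 * n) d E)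
    (T : Fin d → Finset ℕ) (J b m : Fin d → ℕ) (hm : ∀ i, m i < 2 ^ J i)
    (hT : ∀ i, ∀ x ∈ T i, J i ≤ x ∧ x + 1 ≤ J i + b i ∧ (x + 1 = J i + b i ∨ x ≤ J i))
    (hw : ∑ i, ((J i + b i) + (J i + min (b i) 1)) ≤ 2 * n - t) (c : ℕ) :
    ((∃ i, (T i).Nonempty) → ∑ k ∈ blk c n, ∏ i, ((if pre (dig E k i) (J i) = m i then (1:ℝ) else 0) *
      sg (∑ x ∈ T i, dig E k i x)) = 0) ∧
    ((∀ i, T i = ∅) → ∑ k ∈ blk c n, ∏ i, ((if pre (dig E k i) (J i) = m i then (1:ℝ) else 0) *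
      sg (∑ x ∈ T i, dig E k i x)) = 2 ^ n * ∏ i, (1 / 2 ^ J i)) := by
  choose α hα0 hα using fun i => ind_expand (J i) (m i) (hm i)
  have hT' : ∀ S ∈ Fintype.piFinset (fun i => (Finset.range (J i)).powerset), ∀ i,
      ∀ x ∈ S i ∪ T i, x + 1 ≤ J i + b i ∧ (x + 1 = J i + b i ∨ x + 1 ≤ J i + min (b i) 1) := by
    intro S hS i x hx
    rw [Fintype.mem_piFinset] at hS
    rcases Finset.mem_union.1 hx with h | h
    · have := Finset.mem_range.1 (Finset.mem_powerset.1 (hS i) h)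
      omega
    · have := hT i x h
      omega
  have hmain : ∑ k ∈ blk c n, ∏ i, ((if pre (dig E k i) (J i) = m i then (1:ℝ) else 0) *
      sg (∑ x ∈ T i, dig E k i x)) = (∏ i, (1 / (2:ℝ) ^ J i)) *
      ∑ S ∈ Fintype.piFinset (fun i => (Finset.range (J i)).powerset),
        (∏ i, α i (S i)) * ∑ k ∈ blk c n, ∏ i, sg (∑ x ∈ S i ∪ T i, dig E k i x) := by
    simp only [Finset.mul_sum]
    rw [Finset.sum_comm]
    refine Finset.sum_congr rfl fun k _ => ?_
    have h1 : ∀ i, (if pre (dig E k i) (J i) = m i then (1:ℝ) else 0) *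
      sg (∑ x ∈ T i, dig E k i x) = ∑ S ∈ (Finset.range (J i)).powerset,
        1 / 2 ^ J i * (α i S * sg (∑ x ∈ S ∪ T i, dig E k i x)) := by
      intro i
      rw [hα, ← Finset.mul_sum, mul_assoc, Finset.sum_mul]
      congr 1
      refine Finset.sum_congr rfl fun S hS => ?_
      rw [Finset.sum_union, sg_add, mul_assoc]
      rw [Finset.disjoint_left]
      intro x hx hx'
      have := Finset.mem_range.1 (Finset.mem_powerset.1 hS hx)
      have := (hT i x hx').1
      omega
    simp only [h1]
    rw [Finset.prod_univ_sum]
    refine Finset.sum_congr rfl fun S _ => ?_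
    rw [Finset.prod_mul_distrib, Finset.prod_mul_distrib]
  constructor
  · rintro ⟨i, hi⟩
    rw [hmain, Finset.sum_eq_zero, mul_zero]
    intro S hS
    rw [net_char hE (fun i => S i ∪ T i) J b (hT' S hS) hw
      ⟨i, hi.mono Finset.subset_union_right⟩, mul_zero]
  · intro h0
    rw [hmain, Finset.sum_eq_single (fun _ => ∅)]
    · simp [hα0, h0, sg_zero, card_blk, mul_comm]
    · intro S hS hne
      rw [net_char hE (fun i => S i ∪ T i) J b (hT' S hS) hw, mul_zero]
      by_contra hcon
      push Not at hcon
      refine hne (funext fun i => ?_)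
      have := hcon i
      exact (Finset.union_eq_empty.1 this).1
    · intro h; exact absurd (Fintype.mem_piFinset.2 fun i => by simp) h

end HaarLI

namespace HaarLI

/-- The basic convergent series constant. -/
def Hc (e : ℕ) : ℝ := ∑' v : ℕ, ((v:ℝ) + 2) ^ e * (1 / 2) ^ v

lemma summable_Hc (e : ℕ) : Summable (fun v : ℕ => ((v:ℝ) + 2) ^ e * (1 / 2) ^ v) := by
  have h := summable_pow_mul_geometric_of_norm_lt_one e (r := (1/2 : ℝ)) (by norm_num)
  have h2 := ((summable_nat_add_iff 2).2 h).mul_left 4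
  refine h2.congr fun v => ?_
  push_cast
  rw [pow_add]; ring

lemma sum_le_Hc {ι : Type*} (e : ℕ) (s : Finset ι) (v : ι → ℕ) (hv : Set.InjOn v s) :
    ∑ i ∈ s, ((v i:ℝ) + 2) ^ e * (1 / 2) ^ (v i) ≤ Hc e := by
  classical
  rw [← Finset.sum_image (f := fun v : ℕ => ((v:ℝ) + 2) ^ e * (1 / 2) ^ v) hv]
  exact (summable_Hc e).sum_le_tsum _ (fun i _ => by positivity)

lemma Hc_pos (e : ℕ) : 0 < Hc e := by
  have := sum_le_Hc e {0} (fun i : ℕ => i) (by simp)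
  refine lt_of_lt_of_le ?_ this
  simp

lemma card_fiber_le (e R s : ℕ) :
    ((Fintype.piFinset (fun _ : Fin (e + 1) => Finset.range R)).filter
      (fun b => ∑ i, b i = s)).card ≤ (s + 1) ^ e := by
  have h : (Fintype.piFinset (fun _ : Fin e => Finset.range (s + 1))).card = (s + 1) ^ e := by
    simp [Fintype.card_piFinset]
  rw [← h]
  refine Finset.card_le_card_of_injOn (fun b => Fin.tail b) ?_ ?_
  · intro b hb
    have hb' := (Finset.mem_filter.1 (Finset.mem_coe.1 hb)).2
    rw [Finset.mem_coe, Fintype.mem_piFinset]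
    intro i
    rw [Finset.mem_range]
    have : b i.succ ≤ ∑ i, b i := Finset.single_le_sum (fun _ _ => Nat.zero_le _) (Finset.mem_univ _)
    simp only [Fin.tail]; omega
  · intro a ha b hb hab
    have ha' := (Finset.mem_filter.1 (Finset.mem_coe.1 ha)).2
    have hb' := (Finset.mem_filter.1 (Finset.mem_coe.1 hb)).2
    rw [Fin.sum_univ_succ] at ha' hb'
    have hs : ∀ i : Fin e, a i.succ = b i.succ := fun i => congrFun hab i
    simp only [hs] at ha'
    funext i
    refine Fin.cases ?_ (fun i => hs i) i
    omega

lemma comb_sum (e R X : ℕ) (hX : 1 ≤ X) :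
    ∑ b ∈ (Fintype.piFinset (fun _ : Fin (e + 1) => Finset.range R)).filter
      (fun b => X ≤ ∑ i, b i + e), (1 / 2 : ℝ) ^ (∑ i, b i) ≤
    2 ^ e * Hc e * (X : ℝ) ^ e * (1 / 2) ^ X := by
  classical
  set A := (Fintype.piFinset (fun _ : Fin (e + 1) => Finset.range R)).filter
      (fun b => X ≤ ∑ i, b i + e) with hA
  rw [Finset.sum_comp (fun s : ℕ => (1 / 2 : ℝ) ^ s) (fun b : Fin (e + 1) → ℕ => ∑ i, b i)]
  have himg : ∀ s ∈ A.image (fun b => ∑ i, b i), X ≤ s + e := by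
    intro s hs
    obtain ⟨b, hb, rfl⟩ := Finset.mem_image.1 hs
    exact (Finset.mem_filter.1 hb).2
  calc _ ≤ ∑ s ∈ A.image (fun b => ∑ i, b i), (2 ^ e * (X:ℝ) ^ e * (1 / 2) ^ X) *
        ((((s + e - X : ℕ):ℝ) + 2) ^ e * (1 / 2) ^ (s + e - X)) := by
        refine Finset.sum_le_sum fun s hs => ?_
        have hs' := himg s hs
        have hc : (A.filter (fun b => ∑ i, b i = s)).card ≤ (s + 1) ^ e := by
          refine le_trans (Finset.card_le_card ?_) (card_fiber_le e R s)
          exact Finset.filter_subset_filter _ (Finset.filter_subset _ _)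
        obtain ⟨v, hv⟩ := Nat.exists_eq_add_of_le hs'
        have hv' : s + e - X = v := by omega
        rw [hv', nsmul_eq_mul]
        have h1 : (1 / 2 : ℝ) ^ s = 2 ^ e * ((1 / 2) ^ X * (1 / 2) ^ v) := by
          rw [← pow_add, ← hv, pow_add, mul_comm ((1 / 2 : ℝ) ^ s), ← mul_assoc, ← mul_pow]
          norm_num
        have h2 : ((A.filter (fun b => ∑ i, b i = s)).card : ℝ) ≤ ((X:ℝ) * (v + 2)) ^ e := by
          have h3 : s + 1 ≤ X * (v + 2) := by nlinarith
          calc ((A.filter (fun b => ∑ i, b i = s)).card : ℝ) ≤ ((s + 1) ^ e : ℕ) := by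
                exact_mod_cast hc
            _ ≤ ((X * (v + 2)) ^ e : ℕ) := by
                exact_mod_cast Nat.pow_le_pow_left h3 e
            _ = _ := by push_cast; ring
        rw [h1]
        calc _ ≤ ((X:ℝ) * (v + 2)) ^ e * (2 ^ e * ((1 / 2) ^ X * (1 / 2) ^ v)) := by gcongr
          _ = _ := by rw [mul_pow]; ring
    _ ≤ (2 ^ e * (X:ℝ) ^ e * (1 / 2) ^ X) * Hc e := by
        rw [← Finset.mul_sum]
        refine mul_le_mul_of_nonneg_left ?_ (by positivity)
        refine sum_le_Hc e _ (fun s => s + e - X) ?_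
        intro a ha b hb hab
        have h1 := himg a ha
        have h2 := himg b hb
        simp only at hab
        omega
    _ = _ := by ring

lemma prod_inv_pow {d : ℕ} (J : Fin d → ℕ) : ∏ i, (1 / (2:ℝ) ^ J i) = (1 / 2) ^ (∑ i, J i) := by
  rw [← Finset.prod_pow_eq_pow_sum]
  refine Finset.prod_congr rfl fun i _ => ?_
  rw [one_div_pow]

/-- The product building block evaluated at the `k`-th point. -/
def Phi {d : ℕ} (E : Fin d → ℕ → ℕ → ZMod 2) (j : Fin d → ℤ) (m : Fin d → ℕ) (k : ℕ) : ℝ :=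
  ∏ i, phi (j i) (m i) (val (dig E k i))

lemma count_box {d n t : ℕ} {E : Fin d → ℕ → ℕ → ZMod 2} (hE : IsOrderNet 2 n t (2 * n) d E)
    (J m : Fin d → ℕ) (hm : ∀ i, m i < 2 ^ J i) (hw : 2 * ∑ i, J i ≤ 2 * n - t) (c : ℕ) :
    ∑ k ∈ blk c n, ∏ i, (if pre (dig E k i) (J i) = m i then (1:ℝ) else 0) =
      2 ^ n * (1 / 2) ^ (∑ i, J i) := by
  have h := (box_char hE (fun _ => ∅) J (fun _ => 0) m hm (by simp) (by
    simp only [add_zero, Nat.zero_min]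
    rw [Finset.sum_add_distrib]; omega) c).2 (fun _ => rfl)
  rw [← prod_inv_pow, ← h]
  simp [sg_zero]

lemma abs_phi_le (j : ℤ) (hj : -1 ≤ j) (m : ℕ) (hm : m < 2 ^ j.toNat) (y : ℕ → ZMod 2) :
    |phi j m (val y)| ≤ (if pre y j.toNat = m then 1 else 0) * (1 / 2 ^ j.toNat) := by
  by_cases h : j = -1
  · subst h
    have hJ : (-1 : ℤ).toNat = 0 := rfl
    rw [hJ] at hm ⊢
    have hm0 : m = 0 := by simpa using hm
    have h0 := val_nonneg y
    have h1 := val_le_one y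
    rw [phi_neg _ _ h0 h1, hm0]
    simp only [pre, if_true]
    rw [abs_of_nonneg (by linarith)]
    norm_num [h0]
  · obtain ⟨J, rfl⟩ := Int.eq_ofNat_of_zero_le (show 0 ≤ j by omega)
    rw [Int.toNat_natCast] at hm ⊢
    rw [phi_val J m hm, abs_mul]
    have h1 : |(if pre y J = m then (1:ℝ) else 0)| = if pre y J = m then 1 else 0 := by
      split_ifs <;> simp
    rw [h1]
    refine mul_le_mul_of_nonneg_left ?_ (by split_ifs <;> simp)
    rw [abs_div, abs_of_pos (by positivity : (0:ℝ) < 2 ^ J)]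
    refine div_le_div_of_nonneg_right ?_ (by positivity)
    have h2 := abs_half_sub_val (fun i => y (J + 1 + i))
    have h3 : |sg (y J) * (1 / 2 - val (fun i => y (J + 1 + i)))| ≤ 1 / 2 := by
      rw [abs_mul, abs_sg, one_mul]; exact h2
    rw [abs_le] at h3 ⊢
    constructor <;> linarith [h3.1, h3.2]

lemma tail_bound {d n t : ℕ} {E : Fin d → ℕ → ℕ → ZMod 2} (hE : IsOrderNet 2 n t (2 * n) d E)
    (j : Fin d → ℤ) (hj : ∀ i, -1 ≤ j i) (m : Fin d → ℕ) (hm : ∀ i, m i < 2 ^ (j i).toNat)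
    (hw : 2 * jnorm d j ≤ 2 * n - t) (c : ℕ) (s : Finset ℕ) (hs : s ⊆ blk c n) :
    |∑ k ∈ s, Phi E j m k| ≤ 2 ^ n * (1 / 2) ^ (jnorm d j) * (1 / 2) ^ (jnorm d j) := by
  calc |∑ k ∈ s, Phi E j m k| ≤ ∑ k ∈ s, |Phi E j m k| := Finset.abs_sum_le_sum_abs _ _
    _ ≤ ∑ k ∈ blk c n, |Phi E j m k| :=
        Finset.sum_le_sum_of_subset_of_nonneg hs fun _ _ _ => abs_nonneg _
    _ ≤ ∑ k ∈ blk c n, (∏ i, (if pre (dig E k i) (j i).toNat = m i then (1:ℝ) else 0)) *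
          (1 / 2) ^ (jnorm d j) := by
        refine Finset.sum_le_sum fun k _ => ?_
        rw [Phi, Finset.abs_prod, jnorm, ← prod_inv_pow, ← Finset.prod_mul_distrib]
        exact Finset.prod_le_prod (fun _ _ => abs_nonneg _)
          fun i _ => abs_phi_le _ (hj i) _ (hm i) _
    _ = _ := by
        rw [← Finset.sum_mul, count_box hE (fun i => (j i).toNat) m hm hw]; rfl

lemma abs_itg_le (j : ℤ) (hj : -1 ≤ j) (m : ℕ) (hm : m < 2 ^ j.toNat) :
    |itg j m| ≤ 1 / 2 ^ j.toNat * (1 / 2 ^ j.toNat) := by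
  by_cases h : j = -1
  · subst h
    have hJ : (-1 : ℤ).toNat = 0 := rfl
    rw [hJ, itg_neg]; norm_num [abs_of_pos]
  · obtain ⟨J, rfl⟩ := Int.eq_ofNat_of_zero_le (show 0 ≤ j by omega)
    rw [Int.toNat_natCast] at hm ⊢
    rw [itg_nat J m hm, abs_div, abs_div, abs_of_pos (by positivity : (0:ℝ) < 2 ^ J)]
    rw [← div_eq_mul_one_div]
    gcongr
    norm_num [abs_of_neg]

lemma abs_Itg_le {d : ℕ} (j : Fin d → ℤ) (hj : ∀ i, -1 ≤ j i) (m : Fin d → ℕ)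
    (hm : ∀ i, m i < 2 ^ (j i).toNat) :
    |∏ i, itg (j i) (m i)| ≤ (1 / 2) ^ (jnorm d j) * (1 / 2) ^ (jnorm d j) := by
  rw [Finset.abs_prod, jnorm, ← prod_inv_pow, ← Finset.prod_mul_distrib]
  exact Finset.prod_le_prod (fun _ _ => abs_nonneg _) fun i _ => abs_itg_le _ (hj i) _ (hm i)

lemma block_bound {e n t : ℕ} {E : Fin (e + 1) → ℕ → ℕ → ZMod 2}
    (hE : IsOrderNet 2 n t (2 * n) (e + 1) E)
    (j : Fin (e + 1) → ℤ) (hj : ∀ i, -1 ≤ j i) (m : Fin (e + 1) → ℕ)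
    (hm : ∀ i, m i < 2 ^ (j i).toNat) (X : ℕ) (hX : 1 ≤ X)
    (hw : 2 * jnorm (e + 1) j + X + t = 2 * n) (c : ℕ) :
    |∑ k ∈ blk c n, Phi E j m k - 2 ^ n * ∏ i, itg (j i) (m i)| ≤
      2 ^ n * (1 / 2) ^ (jnorm (e + 1) j) * (1 / 2) ^ (jnorm (e + 1) j) *
        (2 ^ e * Hc e * (X : ℝ) ^ e * (1 / 2) ^ X) := by
  classical
  choose cc κ T hphi hbd hκ0 hT0 hcc hne hT using
    fun i => expand (j i) (hj i) (m i) (hm i) (2 * n)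
  set P := Fintype.piFinset (fun _ : Fin (e + 1) => Finset.range (2 * n + 3)) with hP
  let ind : ℕ → Fin (e + 1) → ℝ := fun k i => if pre (dig E k i) (j i).toNat = m i then 1 else 0
  let F : (Fin (e + 1) → ℕ) → ℝ := fun b =>
    ∑ k ∈ blk c n, ∏ i, (ind k i * cc i (b i) (dig E k i))
  have hsum : ∑ k ∈ blk c n, Phi E j m k = ∑ b ∈ P, F b := by
    rw [Finset.sum_comm]
    refine Finset.sum_congr rfl fun k _ => ?_
    rw [Phi, hP, ← Finset.prod_univ_sum (fun _ => Finset.range (2 * n + 3))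
      (fun i b => ind k i * cc i b (dig E k i))]
    refine Finset.prod_congr rfl fun i _ => ?_
    rw [hphi, Finset.mul_sum]
  have hcount := count_box hE (fun i => (j i).toNat) m hm (by
    change 2 * jnorm (e + 1) j ≤ _; omega) c
  have hwalsh : ∀ b : Fin (e + 1) → ℕ, (∀ i, b i < 2 * n + 2) → F b = (∏ i, κ i (b i)) *
      ∑ k ∈ blk c n, ∏ i, (ind k i * sg (∑ x ∈ T i (b i), dig E k i x)) := by
    intro b hb
    rw [Finset.mul_sum]
    refine Finset.sum_congr rfl fun k _ => ?_
    rw [← Finset.prod_mul_distrib]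
    refine Finset.prod_congr rfl fun i _ => ?_
    rw [hcc i (b i) (hb i)]; ring
  have hF0 : F 0 = 2 ^ n * ∏ i, itg (j i) (m i) := by
    rw [hwalsh 0 (fun i => by simp)]
    simp only [Pi.zero_apply, hT0, Finset.sum_empty, sg_zero, mul_one, hκ0]
    rw [hcount, Finset.prod_mul_distrib, Finset.prod_pow_eq_pow_sum]
    have : (2:ℝ) ^ (∑ i, (j i).toNat) * (1 / 2) ^ (∑ i, (j i).toNat) = 1 := by
      rw [← mul_pow]; norm_num
    linear_combination (2 ^ n * ∏ i, itg (j i) (m i)) * this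
  have hgood : ∀ b : Fin (e + 1) → ℕ, b ≠ 0 → ¬ (X ≤ ∑ i, b i + e) → F b = 0 := by
    intro b hb0 hb
    have hbi : ∀ i, b i ≤ ∑ i, b i := fun i =>
      Finset.single_le_sum (fun _ _ => Nat.zero_le _) (Finset.mem_univ i)
    rw [hwalsh b (fun i => by have := hbi i; omega)]
    obtain ⟨i, hi⟩ := Function.ne_iff.1 hb0
    rcases hne i (b i) hi with h | h
    · rw [Finset.prod_eq_zero (Finset.mem_univ i) h, zero_mul]
    · rw [(box_char hE (fun i => T i (b i)) (fun i => (j i).toNat) b m hm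
        (fun i x hx => hT i (b i) x hx) ?_ c).1 ⟨i, h⟩, mul_zero]
      calc ∑ i, (((j i).toNat + b i) + ((j i).toNat + min (b i) 1))
          ≤ ∑ i, (((j i).toNat + b i) + ((j i).toNat + 1)) :=
            Finset.sum_le_sum fun i _ => by omega
        _ = 2 * jnorm (e + 1) j + ∑ i, b i + (e + 1) := by
            simp only [Finset.sum_add_distrib, jnorm]; simp; ring
        _ ≤ 2 * n - t := by omega
  have hbound : ∀ b : Fin (e + 1) → ℕ, |F b| ≤
      2 ^ n * (1 / 2) ^ (jnorm (e + 1) j) * (1 / 2) ^ (jnorm (e + 1) j) * (1 / 2) ^ (∑ i, b i) := by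
    intro b
    calc |F b| ≤ ∑ k ∈ blk c n, |∏ i, (ind k i * cc i (b i) (dig E k i))| :=
          Finset.abs_sum_le_sum_abs _ _
      _ ≤ ∑ k ∈ blk c n, (∏ i, ind k i) *
            ((1 / 2) ^ (jnorm (e + 1) j) * (1 / 2) ^ (∑ i, b i)) := by
          refine Finset.sum_le_sum fun k _ => ?_
          rw [Finset.abs_prod, jnorm, ← prod_inv_pow, ← prod_inv_pow, ← Finset.prod_mul_distrib,
            ← Finset.prod_mul_distrib]
          refine Finset.prod_le_prod (fun _ _ => abs_nonneg _) fun i _ => ?_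
          have h0 : 0 ≤ ind k i := by simp only [ind]; split_ifs <;> simp
          rw [abs_mul, abs_of_nonneg h0, ← div_eq_mul_one_div]
          exact mul_le_mul_of_nonneg_left (hbd i _ _) h0
      _ = _ := by
          rw [← Finset.sum_mul, hcount]; simp only [jnorm]; ring
  have h0P : (0 : Fin (e + 1) → ℕ) ∈ P := by
    rw [hP, Fintype.mem_piFinset]; intro i; simp
  rw [hsum, ← hF0, ← Finset.add_sum_erase P F h0P, add_sub_cancel_left]
  set G : ℝ := 2 ^ n * (1 / 2) ^ (jnorm (e + 1) j) * (1 / 2) ^ (jnorm (e + 1) j) with hG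
  have hG0 : 0 ≤ G := by positivity
  calc |∑ b ∈ P.erase 0, F b| ≤ ∑ b ∈ P.erase 0, |F b| := Finset.abs_sum_le_sum_abs _ _
    _ ≤ ∑ b ∈ P.erase 0, (if X ≤ ∑ i, b i + e then G * (1 / 2) ^ (∑ i, b i) else 0) := by
        refine Finset.sum_le_sum fun b hb => ?_
        split_ifs with h
        · exact hbound b
        · rw [hgood b (Finset.ne_of_mem_erase hb) h, abs_zero]
    _ ≤ ∑ b ∈ P, (if X ≤ ∑ i, b i + e then G * (1 / 2) ^ (∑ i, b i) else 0) := by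
        refine Finset.sum_le_sum_of_subset_of_nonneg (Finset.erase_subset _ _) fun _ _ _ => ?_
        split_ifs <;> positivity
    _ = G * ∑ b ∈ P.filter (fun b => X ≤ ∑ i, b i + e), (1 / 2) ^ (∑ i, b i) := by
        rw [← Finset.sum_filter, Finset.mul_sum]
    _ ≤ _ := mul_le_mul_of_nonneg_left (comb_sum e _ X hX) hG0

end HaarLI

namespace HaarLI

lemma coeff_eq (d : ℕ) (S : ℕ → Fin d → ℝ) (N : ℕ) (j : Fin d → ℤ) (hj : ∀ i, -1 ≤ j i)
    (m : Fin d → ℕ) :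
    haarCoeff d (discSeq d S N) j m =
      (∑ k ∈ Finset.range N, ∏ i, phi (j i) (m i) (S k i)) / N - ∏ i, itg (j i) (m i) := by
  classical
  have hres : (volume : Measure (Fin d → ℝ)).restrict (unitCube d) =
      Measure.pi (fun _ : Fin d => (volume : Measure ℝ).restrict (Set.Icc (0:ℝ) 1)) := by
    rw [unitCube, volume_pi, Measure.restrict_pi_pi]
  have hfun : ∀ x : Fin d → ℝ, discSeq d S N x * haarFn d j m x =
      (∑ k : Fin N, ∏ i, ((if S k i < x i then (1:ℝ) else 0) * haar1 (j i) (m i) (x i))) / N -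
      ∏ i, (x i * haar1 (j i) (m i) (x i)) := by
    intro x
    have h1 : (Nat.card {k : Fin N // ∀ i, S k i < x i} : ℝ) =
        ∑ k : Fin N, ∏ i, (if S k i < x i then (1:ℝ) else 0) := by
      rw [Nat.card_eq_fintype_card, Fintype.card_subtype, Finset.card_filter]
      push_cast
      refine Finset.sum_congr rfl fun k _ => ?_
      rw [Finset.prod_boole]
      simp
    rw [discSeq, haarFn, h1, sub_mul, ← Finset.prod_mul_distrib, div_mul_eq_mul_div,
      Finset.sum_mul]
    simp only [← Finset.prod_mul_distrib]
  have hi1 : ∀ k : Fin N, Integrable (fun x : Fin d → ℝ =>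
      ∏ i, ((if S k i < x i then (1:ℝ) else 0) * haar1 (j i) (m i) (x i)))
      (Measure.pi (fun _ : Fin d => (volume : Measure ℝ).restrict (Set.Icc (0:ℝ) 1))) := fun k =>
    Integrable.fintype_prod
      (f := fun i x => (if S k i < x then (1:ℝ) else 0) * haar1 (j i) (m i) x)
      fun i => integrable_phi (j i) (hj i) (m i) (S k i)
  have hi2 : Integrable (fun x : Fin d → ℝ => ∏ i, (x i * haar1 (j i) (m i) (x i)))
      (Measure.pi (fun _ : Fin d => (volume : Measure ℝ).restrict (Set.Icc (0:ℝ) 1))) :=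
    Integrable.fintype_prod (f := fun i x => x * haar1 (j i) (m i) x)
      fun i => integrable_itg (j i) (hj i) (m i)
  unfold haarCoeff
  rw [hres]
  simp only [hfun]
  rw [integral_sub ((integrable_finsetSum _ fun k _ => hi1 k).div_const _) hi2, integral_div,
    integral_finsetSum _ fun k _ => hi1 k]
  congr 1
  · congr 1
    rw [Finset.sum_range]
    refine Finset.sum_congr rfl fun k _ => ?_
    exact integral_fintype_prod_eq_prod
      (fun i x => (if S k i < x then (1:ℝ) else 0) * haar1 (j i) (m i) x)
  · exact integral_fintype_prod_eq_prod (fun i x => x * haar1 (j i) (m i) x)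

/-- Tail sums of the binary expansion. -/
def SS (n : ℕ → ℕ) (r κ : ℕ) : ℕ := ∑ i ∈ Finset.Ico κ r, 2 ^ n i

lemma SS_succ (n : ℕ → ℕ) (r κ : ℕ) (h : κ < r) : SS n r κ = 2 ^ n κ + SS n r (κ + 1) := by
  rw [SS, SS, Finset.sum_eq_sum_Ico_succ_bot h]

lemma SS_dvd (n : ℕ → ℕ) (r κ p : ℕ) (h : ∀ i, κ ≤ i → i < r → p ≤ n i) : 2 ^ p ∣ SS n r κ := by
  refine Finset.dvd_sum fun i hi => ?_
  rw [Finset.mem_Ico] at hi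
  exact pow_dvd_pow 2 (h i hi.1 hi.2)

lemma sum_decomp (n : ℕ → ℕ) (r : ℕ) (f : ℕ → ℝ) (q : ℕ) : ∀ μ, μ + q = r →
    ∑ k ∈ Finset.range (SS n r μ), f k =
      ∑ κ ∈ Finset.Ico μ r, ∑ k ∈ Finset.Ico (SS n r (κ + 1)) (SS n r κ), f k := by
  induction q with
  | zero => intro μ h; simp at h; subst h; simp [SS]
  | succ q ih =>
    intro μ h
    rw [Finset.sum_eq_sum_Ico_succ_bot (by omega), ← ih (μ + 1) (by omega), add_comm,
      Finset.sum_range_add_sum_Ico]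
    rw [SS_succ n r μ (by omega)]; exact Nat.le_add_left _ _

lemma low_sum_lt (n : ℕ → ℕ) : ∀ (μ p : ℕ), (∀ i i', i < i' → i' < μ → n i < n i') →
    (∀ i < μ, n i < p) → ∑ i ∈ Finset.range μ, 2 ^ n i < 2 ^ p := by
  intro μ
  induction μ with
  | zero => intro p _ _; simp
  | succ μ ih =>
    intro p h1 h2
    rw [Finset.sum_range_succ]
    have h3 := ih (n μ) (fun i i' h h' => h1 i i' h (by omega)) (fun i hi => h1 i μ hi (by omega))
    have h4 : 2 ^ (n μ + 1) ≤ 2 ^ p := Nat.pow_le_pow_right (by norm_num) (h2 μ (by omega))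
    rw [pow_succ] at h4
    omega

lemma Ico_eq_blk (a n : ℕ) (h : 2 ^ n ∣ a) : Finset.Ico a (2 ^ n + a) = blk (a / 2 ^ n) n := by
  obtain ⟨c, rfl⟩ := h
  rw [Nat.mul_div_cancel_left _ (by positivity), blk, mul_comm c, add_mul, one_mul, mul_comm c,
    add_comm]

lemma main_bound {e t r N μ : ℕ} {E : Fin (e + 1) → ℕ → ℕ → ZMod 2} (hE : IsOrderSeq 2 t (e + 1) E)
    (n : ℕ → ℕ) (hn : ∀ i i', i < i' → i' < r → n i < n i') (hN : N = ∑ i ∈ Finset.range r, 2 ^ n i)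
    (hμ : μ ≤ r)
    (j : Fin (e + 1) → ℤ) (hj : ∀ i, -1 ≤ j i) (m : Fin (e + 1) → ℕ)
    (hm : ∀ i, m i < 2 ^ (j i).toNat)
    (h1 : ∀ i < μ, 2 * n i ≤ 2 * jnorm (e + 1) j + t)
    (h2 : ∀ i, μ ≤ i → i < r → 2 * jnorm (e + 1) j + t < 2 * n i) :
    |∑ k ∈ Finset.range N, Phi E j m k - N * ∏ i, itg (j i) (m i)| ≤
      6 * 2 ^ t * (1 / 2) ^ (jnorm (e + 1) j) +
      (if μ < r then 4 ^ e * Hc e ^ 2 * 2 ^ t *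
        (((2 * n μ - t - 2 * jnorm (e + 1) j : ℕ) : ℝ) ^ e * (1 / 2) ^ n μ) else 0) := by
  set D := jnorm (e + 1) j with hD
  set I := ∏ i, itg (j i) (m i) with hI
  have hS0 : N = SS n r μ + ∑ i ∈ Finset.range μ, 2 ^ n i := by
    rw [hN, SS, add_comm, Finset.sum_range_add_sum_Ico _ hμ]
  set Q := ∑ i ∈ Finset.range μ, 2 ^ n i with hQ
  have hmono : ∀ i i', i ≤ i' → i' < r → n i + (i' - i) ≤ n i' := by
    intro i i' hii
    induction i', hii using Nat.le_induction with
    | base => intro _; simp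
    | succ k hk ih =>
      intro hk'
      have := ih (by omega)
      have := hn k (k + 1) (by omega) hk'
      omega
  have hTail : |∑ k ∈ Finset.Ico (SS n r μ) N, Phi E j m k - Q * I| ≤ 6 * 2 ^ t * (1 / 2) ^ D := by
    rcases Nat.eq_zero_or_pos μ with h0 | h0
    · have hQ0 : Q = 0 := by rw [hQ, h0]; simp
      have hN' : N = SS n r μ := by omega
      rw [← hN', hQ0]; simp
    · set p₀ := n (μ - 1) + 1 with hp₀
      have hlow : ∀ i < μ, n i < p₀ := by
        intro i hi
        have := hmono i (μ - 1) (by omega) (by omega)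
        omega
      have hQlt : Q < 2 ^ p₀ := low_sum_lt n μ p₀ (fun i i' h h' => hn i i' h (by omega)) hlow
      have hdvd : 2 ^ p₀ ∣ SS n r μ := SS_dvd n r μ p₀ fun i hi hi' => by
        have := hn (μ - 1) i (by omega) hi'
        omega
      have hn1 := h1 (μ - 1) (by omega)
      set p := D + (t + 1) / 2 + 1 with hp
      have hp₀p : p₀ ≤ p := by omega
      have hnet := hE p (by omega)
      have hsub : Finset.Ico (SS n r μ) N ⊆ blk (SS n r μ / 2 ^ p) p := by
        intro k hk
        have hk1 : k ∈ blk (SS n r μ / 2 ^ p₀) p₀ := by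
          rw [← Ico_eq_blk _ _ hdvd]
          rw [Finset.mem_Ico] at hk ⊢
          omega
        rw [mem_blk] at hk1 ⊢
        obtain ⟨v, hv⟩ := Nat.exists_eq_add_of_le hp₀p
        rw [hv, pow_add, ← Nat.div_div_eq_div_mul, hk1, Nat.div_div_eq_div_mul]
      have hb := tail_bound hnet j hj m hm (by omega) _ _ hsub
      have hI' := abs_Itg_le j hj m hm
      rw [← hD] at hb hI'
      have hDD : (2:ℝ) ^ D * (1 / 2) ^ D = 1 := by rw [← mul_pow]; norm_num
      have hb2 : (2:ℝ) ^ p * (1 / 2) ^ D * (1 / 2) ^ D ≤ 4 * 2 ^ t * (1 / 2) ^ D := by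
        have h3 : (2:ℝ) ^ p ≤ 2 ^ D * (4 * 2 ^ t) := by
          have : (2:ℝ) ^ D * (4 * 2 ^ t) = 2 ^ (D + (t + 2)) := by ring
          rw [this]
          exact pow_le_pow_right₀ (by norm_num) (by omega)
        refine mul_le_mul_of_nonneg_right ?_ (by positivity)
        calc (2:ℝ) ^ p * (1 / 2) ^ D ≤ 2 ^ D * (4 * 2 ^ t) * (1 / 2) ^ D := by gcongr
          _ = 4 * 2 ^ t := by linear_combination (4 * 2 ^ t) * hDD
      have hb3 : |(Q:ℝ) * I| ≤ 2 * 2 ^ t * (1 / 2) ^ D := by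
        have h3 : (Q:ℝ) ≤ 2 ^ D * (2 * 2 ^ t) := by
          have h4 : (2:ℝ) ^ D * (2 * 2 ^ t) = 2 ^ (D + (t + 1)) := by ring
          rw [h4]
          have h5 : Q ≤ 2 ^ (D + (t + 1)) :=
            hQlt.le.trans (Nat.pow_le_pow_right (by norm_num) (by omega))
          exact_mod_cast h5
        rw [abs_mul, abs_of_nonneg (Nat.cast_nonneg Q)]
        calc (Q:ℝ) * |I| ≤ 2 ^ D * (2 * 2 ^ t) * ((1 / 2) ^ D * (1 / 2) ^ D) := by gcongr
          _ = 2 * 2 ^ t * (1 / 2) ^ D := by linear_combination (2 * 2 ^ t * (1 / 2) ^ D) * hDD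
      calc _ ≤ |∑ k ∈ Finset.Ico (SS n r μ) N, Phi E j m k| + |(Q:ℝ) * I| := abs_sub _ _
        _ ≤ _ := by linarith
  have hBlock : ∀ κ ∈ Finset.Ico μ r,
      |∑ k ∈ Finset.Ico (SS n r (κ + 1)) (SS n r κ), Phi E j m k - 2 ^ n κ * I| ≤
      4 ^ e * Hc e * 2 ^ t * (((2 * n μ - t - 2 * D : ℕ) : ℝ) ^ e * (1 / 2) ^ n μ) *
        ((((n κ - n μ : ℕ) : ℝ) + 2) ^ e * (1 / 2) ^ (n κ - n μ)) := by
    intro κ hκ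
    rw [Finset.mem_Ico] at hκ
    have hκ2 := h2 κ hκ.1 hκ.2
    have hμ2 := h2 μ le_rfl (by omega)
    have hdvd : 2 ^ n κ ∣ SS n r (κ + 1) := SS_dvd n r (κ + 1) (n κ) fun i hi hi' =>
      (hn κ i (by omega) hi').le
    rw [SS_succ n r κ hκ.2, Ico_eq_blk _ _ hdvd]
    have hle := hmono μ κ hκ.1 hκ.2
    obtain ⟨v, hv⟩ := Nat.exists_eq_add_of_le (show n μ ≤ n κ by omega)
    have hv' : n κ - n μ = v := by omega
    set X := 2 * n μ - t - 2 * D with hX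
    have hX1 : 1 ≤ X := by omega
    have hb := block_bound (hE (n κ) (by omega)) j hj m hm (X + 2 * v) (by omega)
      (by omega) (SS n r (κ + 1) / 2 ^ n κ)
    rw [← hD] at hb
    rw [hv']
    refine hb.trans ?_
    have hH := Hc_pos e
    have hXv : ((X + 2 * v : ℕ) : ℝ) ≤ 2 * X * (v + 2) := by
      have : X + 2 * v ≤ 2 * X * (v + 2) := by nlinarith
      exact_mod_cast this
    have hpow : (2:ℝ) ^ n κ * (1 / 2) ^ D * (1 / 2) ^ D * (1 / 2) ^ (X + 2 * v) =
        2 ^ t * (1 / 2) ^ n μ * (1 / 2) ^ v := by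
      have h3 : (1 / 2 : ℝ) ^ D * (1 / 2) ^ D * (1 / 2) ^ (X + 2 * v) * (1 / 2) ^ t =
          (1 / 2) ^ n κ * ((1 / 2) ^ n μ * (1 / 2) ^ v) := by
        rw [← pow_add, ← pow_add, ← pow_add, ← pow_add, ← pow_add]
        congr 1; omega
      have h4 : (2:ℝ) ^ n κ * (1 / 2) ^ n κ = 1 := by rw [← mul_pow]; norm_num
      have h5 : (2:ℝ) ^ t * (1 / 2) ^ t = 1 := by rw [← mul_pow]; norm_num
      calc (2:ℝ) ^ n κ * (1 / 2) ^ D * (1 / 2) ^ D * (1 / 2) ^ (X + 2 * v)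
          = 2 ^ n κ * (1 / 2) ^ D * (1 / 2) ^ D * (1 / 2) ^ (X + 2 * v) * (2 ^ t * (1 / 2) ^ t) := by
            rw [h5, mul_one]
        _ = 2 ^ n κ * 2 ^ t *
            ((1 / 2 : ℝ) ^ D * (1 / 2) ^ D * (1 / 2) ^ (X + 2 * v) * (1 / 2) ^ t) := by ring
        _ = (2 ^ n κ * (1 / 2) ^ n κ) * (2 ^ t * (1 / 2) ^ n μ * (1 / 2) ^ v) := by rw [h3]; ring
        _ = _ := by rw [h4, one_mul]
    calc (2:ℝ) ^ n κ * (1 / 2) ^ D * (1 / 2) ^ D *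
          (2 ^ e * Hc e * ((X + 2 * v : ℕ) : ℝ) ^ e * (1 / 2) ^ (X + 2 * v))
        = (2:ℝ) ^ n κ * (1 / 2) ^ D * (1 / 2) ^ D * (1 / 2) ^ (X + 2 * v) *
          (2 ^ e * Hc e * ((X + 2 * v : ℕ) : ℝ) ^ e) := by ring
      _ ≤ 2 ^ t * (1 / 2) ^ n μ * (1 / 2) ^ v * (2 ^ e * Hc e * (2 * X * (v + 2)) ^ e) := by
          rw [hpow]; gcongr
      _ = _ := by
          rw [mul_pow, mul_pow, show (4:ℝ) = 2 * 2 by norm_num, mul_pow]; ring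
  have hsplit : ∑ k ∈ Finset.range N, Phi E j m k - N * I =
      (∑ k ∈ Finset.Ico (SS n r μ) N, Phi E j m k - Q * I) +
      ∑ κ ∈ Finset.Ico μ r,
        (∑ k ∈ Finset.Ico (SS n r (κ + 1)) (SS n r κ), Phi E j m k - 2 ^ n κ * I) := by
    have h3 : (N : ℝ) = (SS n r μ : ℕ) + (Q : ℕ) := by exact_mod_cast hS0
    have h4 : ((SS n r μ : ℕ) : ℝ) = ∑ κ ∈ Finset.Ico μ r, (2:ℝ) ^ n κ := by
      rw [SS]; push_cast; rfl
    rw [Finset.sum_sub_distrib, ← sum_decomp n r _ (r - μ) μ (by omega), ← Finset.sum_mul, ← h4, h3,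
      ← Finset.sum_range_add_sum_Ico _ (show SS n r μ ≤ N by omega)]
    ring
  rw [hsplit]
  refine (abs_add_le _ _).trans (add_le_add hTail ?_)
  refine (Finset.abs_sum_le_sum_abs _ _).trans ?_
  split_ifs with hμr
  · refine (Finset.sum_le_sum hBlock).trans ?_
    rw [← Finset.mul_sum]
    have hH := Hc_pos e
    have hs := sum_le_Hc e (Finset.Ico μ r) (fun κ => n κ - n μ) (by
      intro a ha b hb hab
      rw [Finset.coe_Ico, Set.mem_Ico] at ha hb
      simp only at hab
      have h3 := hmono μ a ha.1 ha.2
      have h4 := hmono μ b hb.1 hb.2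
      rcases lt_trichotomy a b with h | h | h
      · have := hn a b h hb.2; omega
      · exact h
      · have := hn b a h ha.2; omega)
    calc _ ≤ 4 ^ e * Hc e * 2 ^ t * (((2 * n μ - t - 2 * D : ℕ) : ℝ) ^ e * (1 / 2) ^ n μ) * Hc e :=
          mul_le_mul_of_nonneg_left hs (by positivity)
      _ = _ := by ring
  · have : μ = r := by omega
    rw [this]; simp

end HaarLI

/-- Haar coefficient bounds for large dyadic intervals
(`n_μ ≤ |j| + t/2 < n_{μ+1}`, where `N = 2^{n_r} + ⋯ + 2^{n_1}`, `n_0 = 0`,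
`n_{r+1} = log₂ N`) of an order `2` digital `(t,d)`-sequence with triangular
generating matrices. -/
theorem haar_coeff_large_intervals (d : ℕ) (hd : 0 < d) :
    ∃ C : ℝ, 0 < C ∧ ∀ (t : ℕ) (E : Fin d → ℕ → ℕ → ZMod 2),
      IsOrderSeq 2 t d E → Triangular2 d E →
      ∀ (N : ℕ), 2 ≤ N → ∀ (r : ℕ), 0 < r → ∀ (n : Fin r → ℕ), StrictMono n →
        N = ∑ i, 2 ^ (n i) →
        ∀ (μ : ℕ), μ ≤ r →
        ∀ (j : Fin d → ℤ), (∀ i, -1 ≤ j i) →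
          nPrev r n μ ≤ (jnorm d j : ℝ) + (t:ℝ)/2 →
          (jnorm d j : ℝ) + (t:ℝ)/2 < nExt r n N μ →
          ∀ (m : Fin d → ℕ), (∀ i, m i < 2 ^ (j i).toNat) →
            |haarCoeff d (discSeq d (digitalSeq d E) N) j m| ≤
              C * 2 ^ t / N *
                (((2:ℝ) ^ (jnorm d j))⁻¹ +
                  (2 * nExt r n N μ - (t:ℝ) - 2 * (jnorm d j : ℝ)) ^ (d - 1) *
                    (2:ℝ) ^ (-(nExt r n N μ))) := by

  obtain ⟨e, rfl⟩ : ∃ e, d = e + 1 := ⟨d - 1, by omega⟩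
  have hCp : 0 < 4 ^ e * HaarLI.Hc e ^ 2 := by
    have := HaarLI.Hc_pos e
    positivity
  refine ⟨6 + 4 ^ e * HaarLI.Hc e ^ 2, by positivity, ?_⟩
  intro t E hE _ N hN2 r hr n hn hN μ hμ j hj hlo hhi m hm
  set n' : ℕ → ℕ := fun i => if h : i < r then n ⟨i, h⟩ else 0 with hn'
  have hn'v : ∀ i (h : i < r), n' i = n ⟨i, h⟩ := fun i h => by simp [hn', h]
  have hmono : ∀ i i', i < i' → i' < r → n' i < n' i' := by
    intro i i' h h'
    rw [hn'v i (h.trans h'), hn'v i' h']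
    exact hn (by simpa using h)
  have hNs : N = ∑ i ∈ Finset.range r, 2 ^ n' i := by
    rw [hN, Finset.sum_range]
    refine Finset.sum_congr rfl fun i _ => ?_
    rw [hn'v i.1 i.2]
  have h1 : ∀ i < μ, 2 * n' i ≤ 2 * jnorm (e+1) j + t := by
    intro i hi
    have hp : nPrev r n μ = (n' (μ - 1) : ℝ) := by
      have h2 : μ - 1 < r := by omega
      have h0 : μ ≠ 0 := by omega
      rw [hn'v _ h2]
      simp only [nPrev]
      split_ifs <;> first | rfl | omega
    rw [hp] at hlo
    have hle : n' i ≤ n' (μ - 1) := by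
      rcases Nat.lt_or_ge i (μ - 1) with h | h
      · exact (hmono i (μ - 1) h (by omega)).le
      · have : i = μ - 1 := by omega
        rw [this]
    have : ((2 * n' (μ - 1) : ℕ) : ℝ) ≤ ((2 * jnorm (e+1) j + t : ℕ) : ℝ) := by
      push_cast; linarith
    have := Nat.cast_le.mp this
    omega
  have hx : ∀ h : μ < r, nExt r n N μ = (n' μ : ℝ) := by
    intro h
    rw [hn'v _ h]
    simp only [nExt]
    split_ifs
    rfl
  have h2' : μ < r → 2 * jnorm (e+1) j + t < 2 * n' μ := by
    intro h
    rw [hx h] at hhi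
    have : ((2 * jnorm (e+1) j + t : ℕ) : ℝ) < ((2 * n' μ : ℕ) : ℝ) := by
      push_cast; linarith
    exact Nat.cast_lt.mp this
  have h2 : ∀ i, μ ≤ i → i < r → 2 * jnorm (e+1) j + t < 2 * n' i := by
    intro i hi hir
    have := h2' (by omega)
    rcases hi.lt_or_eq with h | h
    · have := hmono μ i h hir
      omega
    · rw [← h]; exact this
  have key := HaarLI.main_bound hE n' hmono hNs hμ j hj m hm h1 h2
  have hNp : (0:ℝ) < N := by
    have : 0 < N := by omega
    exact_mod_cast this
  have hco : haarCoeff (e+1) (discSeq (e+1) (digitalSeq (e+1) E) N) j m =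
      (∑ k ∈ Finset.range N, HaarLI.Phi E j m k - N * ∏ i, HaarLI.itg (j i) (m i)) / N := by
    rw [HaarLI.coeff_eq (e+1) _ N j hj m, sub_div, mul_div_cancel_left₀ _ hNp.ne']
    rfl
  rw [hco, abs_div, abs_of_pos hNp, div_mul_eq_mul_div]
  refine div_le_div_of_nonneg_right (key.trans ?_) hNp.le
  have hb : (0:ℝ) ≤ 2 * nExt r n N μ - (t:ℝ) - 2 * (jnorm (e+1) j : ℝ) := by linarith
  have hA : ((1:ℝ)/2) ^ jnorm (e+1) j = ((2:ℝ) ^ (jnorm (e+1) j))⁻¹ := by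
    rw [one_div, inv_pow]
  rw [hA, Nat.add_sub_cancel]
  set A := ((2:ℝ) ^ (jnorm (e+1) j))⁻¹ with hAd
  have hA0 : 0 ≤ A := by positivity
  set B := (2 * nExt r n N μ - (t:ℝ) - 2 * (jnorm (e+1) j : ℝ)) ^ e *
                    (2:ℝ) ^ (-(nExt r n N μ)) with hB
  have hB0 : 0 ≤ B := mul_nonneg (pow_nonneg hb _) (Real.rpow_nonneg (by norm_num) _)
  set K := 4 ^ e * HaarLI.Hc e ^ 2 with hK
  have hT : (0:ℝ) < 2 ^ t := by positivity
  have hfin : 6 * 2 ^ t * A + K * 2 ^ t * B ≤ (6 + K) * 2 ^ t * (A + B) := by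
    have e1 := mul_nonneg (mul_nonneg hCp.le hT.le) hA0
    have e2 := mul_nonneg hT.le hB0
    nlinarith
  refine le_trans ?_ hfin
  gcongr
  split_ifs with h
  · have : ((2 * n' μ - t - 2 * jnorm (e+1) j : ℕ):ℝ) ^ e * (1/2) ^ n' μ = B := by
      have hh := h2' h
      rw [hB, hx h, Real.rpow_neg (by norm_num), Real.rpow_natCast, one_div, inv_pow,
        Nat.cast_sub (by omega), Nat.cast_sub (by omega)]
      push_cast
      rfl
    rw [this]
  · positivity

end
end
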